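/- Let n ≥ 3 and let K ⊆ ℝⁿ be a closed convex set with nonempty interior, K ≠ ℝⁿ, containing no affine line. Let δ : S^{n−1} → ℝ be continuous, H(u) = {x ∈ ℝⁿ : ⟨x, u⟩ = δ(u)}, and assume that for every u ∈ S^{n−1} the set frontier K ∩ H(u) is an (n−1)-dimensional convex quadric in H(u). If K is not strictly convex or K is not regular, then frontier K is a sheet of an elliptic cone, i.e., there exist an affine isometry f of ℝⁿ and scalars a₂, …, aₙ > 0 such that f(frontier K) = {x ∈ ℝⁿ : x₁ = √(a₂x₂² + ⋯ + aₙxₙ²)}. -/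

import Mathlib

open Set Metric RealInnerProductSpace

noncomputable section

/-- Euclidean n-space. -/
abbrev En (n : ℕ) := EuclideanSpace ℝ (Fin n)

/-- A quadric surface in ℝⁿ: the zero set of a quadratic polynomial whose quadratic
part (given by a symmetric matrix) is not identically zero. -/
def IsQuadricSurface {n : ℕ} (Q : Set (En n)) : Prop :=
  ∃ (a : Matrix (Fin n) (Fin n) ℝ) (b : Fin n → ℝ) (c : ℝ),
    a.IsSymm ∧ a ≠ 0 ∧
    Q = {x : En n | (∑ i, ∑ k, a i k * x i * x k) + 2 * (∑ i, b i * x i) + c = 0}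

/-- A real quadric surface: a nonempty quadric surface. -/
def IsRealQuadricSurface {n : ℕ} (Q : Set (En n)) : Prop :=
  IsQuadricSurface Q ∧ Q.Nonempty

/-- The set of connected components of a subset `F` of a topological space. -/
def componentsIn {α : Type*} [TopologicalSpace α] (F : Set α) : Set (Set α) :=
  {C | ∃ x ∈ F, C = connectedComponentIn F x}

/-- A convex quadric: the frontier of a convex connected component of the complement
of a real quadric surface. -/
def IsConvexQuadric {n : ℕ} (S : Set (En n)) : Prop :=
  ∃ Q U : Set (En n), IsRealQuadricSurface Q ∧ U ∈ componentsIn Qᶜ ∧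
    Convex ℝ U ∧ S = frontier U
/-- `S` is an (n−1)-dimensional convex quadric in the hyperplane `H ⊆ ℝⁿ`:
for some affine isometry φ : ℝ^{n−1} → ℝⁿ with image `H`, the set φ⁻¹(S) is a
convex quadric in ℝ^{n−1}. -/
def IsConvexQuadricIn {n : ℕ} (H S : Set (En n)) : Prop :=
  S ⊆ H ∧ ∃ φ : En (n - 1) →ᵃⁱ[ℝ] En n,
    Set.range (φ : En (n - 1) → En n) = H ∧ IsConvexQuadric ((φ : En (n - 1) → En n) ⁻¹' S)

/-- The hyperplane H(u) = {x : ⟨x, u⟩ = δ(u)} associated to a unit vector u. -/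
def sphHyp {n : ℕ} (δ : sphere (0 : En n) 1 → ℝ) (u : sphere (0 : En n) 1) : Set (En n) :=
  {x : En n | ⟪x, (u : En n)⟫ = δ u}
/-- `K` contains no affine line. -/
def LineFree {n : ℕ} (K : Set (En n)) : Prop :=
  ¬ ∃ (p v : En n), v ≠ 0 ∧ ∀ t : ℝ, p + t • v ∈ K
/-- `G` is a supporting hyperplane of `K` at the point `x`. -/
def IsSupportHyperplaneAt {n : ℕ} (K : Set (En n)) (x : En n) (G : Set (En n)) : Prop :=
  (∃ (v : En n) (c : ℝ), v ≠ 0 ∧ G = {y : En n | ⟪y, v⟫ = c}) ∧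
    x ∈ G ∧ (G ∩ K).Nonempty ∧ G ∩ interior K = ∅

/-- `K` is strictly convex: its frontier contains no segment with distinct endpoints. -/
def IsStrictlyConvexSet {n : ℕ} (K : Set (En n)) : Prop :=
  ∀ x ∈ frontier K, ∀ y ∈ frontier K, x ≠ y → ¬ segment ℝ x y ⊆ frontier K

/-- `K` is regular: every frontier point lies on exactly one supporting hyperplane. -/
def IsRegularSet {n : ℕ} (K : Set (En n)) : Prop :=
  ∀ x ∈ frontier K, ∃! G : Set (En n), IsSupportHyperplaneAt K x G

/-!
A frontier point with two independent normals turns out to be the apex of a cone. Put it at the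
origin. For each frontier direction `x` of the tangent cone, `δ` changes sign along a half circle of
unit vectors orthogonal to `x`, so some hyperplane `H(u)` passes through the origin and contains
`x`. On the section by `H(u)` the quadratic equation has no constant term, and the corner at the
origin kills its linear part too; the section is therefore a cone and contains the ray through `x`.
Hence `K` is its own tangent cone.

The cone `K` contains no line, so some `H(u)` cuts every ray of its frontier. Homogenizing the
equation of that one section gives a nonzero quadratic form vanishing on the whole frontier, and
diagonalizing it yields the elliptic cone.

Non-regularity provides two normals at once. If instead the frontier contains a segment, extend it
to a maximal one and put its endpoint at the origin: the section by a central `H(u)` containing the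
segment is a cone, and if there were only one normal, this section would contain a line.
-/

section

open Filter Topology Module Pointwise

section FrontierOnLines

theorem exists_mem_frontier_of_isPreconnected {X : Type*} [TopologicalSpace X] {S K : Set X}
    {x y : X} (hS : IsPreconnected S) (hx : x ∈ S) (hy : y ∈ S) (hxK : x ∈ K) (hyK : y ∉ K) :
    ∃ z ∈ S, z ∈ frontier K := by
  by_contra! hfrontier
  have hcover : S ⊆ interior K ∪ interior Kᶜ := fun z hz => by
    rw [← compl_frontier_eq_union_interior]
    exact hfrontier z hz
  have hdisj : Disjoint (interior K) (interior Kᶜ) :=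
    disjoint_compl_right.mono interior_subset interior_subset
  rcases hS.subset_or_subset isOpen_interior isOpen_interior hdisj hcover with h | h
  · exact hyK (interior_subset (h hy))
  · exact interior_subset (h hx) hxK

variable {E : Type*} [NormedAddCommGroup E] [NormedSpace ℝ E] {K : Set E}

theorem exists_add_smul_mem_frontier {x v : E} {a b : ℝ} (ha : x + a • v ∈ K)
    (hb : x + b • v ∉ K) : ∃ s ∈ uIcc a b, x + s • v ∈ frontier K := by
  have hpath : IsPreconnected ((fun s : ℝ => x + s • v) '' uIcc a b) :=
    isPreconnected_uIcc.image _ (by fun_prop)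
  simpa using exists_mem_frontier_of_isPreconnected hpath (mem_image_of_mem _ left_mem_uIcc)
    (mem_image_of_mem _ right_mem_uIcc) ha hb

theorem eventually_add_smul_mem_interior {x : E} (hx : x ∈ interior K) (v : E) :
    ∀ᶠ s : ℝ in 𝓝 0, x + s • v ∈ interior K := by
  have hcont : ContinuousAt (fun s : ℝ => x + s • v) 0 := by fun_prop
  exact hcont.eventually_mem (by simpa using isOpen_interior.mem_nhds hx)

theorem exists_pos_add_smul_mem_interior {x : E} (hx : x ∈ interior K) (v : E) :
    ∃ s : ℝ, 0 < s ∧ x + s • v ∈ interior K := by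
  have h := (eventually_add_smul_mem_interior hx v).filter_mono (nhdsWithin_le_nhds (s := Ioi 0))
  exact (h.and self_mem_nhdsWithin).exists.imp fun s hs => ⟨hs.2, hs.1⟩

theorem mem_of_forall_pos_add_smul_mem (hK : IsClosed K) {x v : E}
    (h : ∀ ε : ℝ, 0 < ε → x + ε • v ∈ K) : x ∈ K := by
  have hcont : ContinuousWithinAt (fun ε : ℝ => x + ε • v) (Ioi 0) 0 := by fun_prop
  simpa [hK.closure_eq] using hcont.mem_closure (t := K) (by simp [closure_Ioi]) h

theorem ordConnected_setOf_add_smul_mem (hK : Convex ℝ K) (x v : E) :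
    OrdConnected {s : ℝ | x + s • v ∈ K} := by
  have h := (hK.affine_preimage (AffineMap.lineMap x (x + v) : ℝ →ᵃ[ℝ] E)).ordConnected
  simpa [preimage, AffineMap.lineMap_apply, add_comm] using h

theorem eq_zero_of_forall_mem_eq_zero (hK : (interior K).Nonempty) {L : Dual ℝ E}
    (hL : ∀ x ∈ K, L x = 0) : L = 0 := by
  obtain ⟨z, hz⟩ := hK
  ext v
  obtain ⟨s, hs, hzs⟩ := exists_pos_add_smul_mem_interior hz v
  have h := hL _ (interior_subset hzs)
  rw [map_add, map_smul, hL z (interior_subset hz), zero_add, smul_eq_mul] at h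
  exact (mul_eq_zero.1 h).resolve_left hs.ne'

end FrontierOnLines

section QuadraticBoundary

variable {E : Type*} [NormedAddCommGroup E] [NormedSpace ℝ E] {K : Set E}

/-- A cone with apex at the origin, as a set stable under multiplication by nonnegative reals;
convexity and closedness are stated separately. -/
def IsConic {E : Type*} [SMul ℝ E] (K : Set E) : Prop :=
  ∀ x ∈ K, ∀ t : ℝ, 0 ≤ t → t • x ∈ K

theorem quadraticForm_add_smul {M : Type*} [AddCommGroup M] [Module ℝ M] (Q : QuadraticForm ℝ M)
    (x y : M) (s : ℝ) :
    Q (x + s • y) = Q x + s * QuadraticMap.polar Q x y + s ^ 2 * Q y := by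
  rw [QuadraticMap.map_add Q, QuadraticMap.map_smul, QuadraticMap.polar_smul_right]
  simp only [smul_eq_mul]
  ring

theorem dense_setOf_quadraticForm_ne_zero {Q : QuadraticForm ℝ E} (hQ : Q ≠ 0) :
    Dense {x | Q x ≠ 0} := by
  obtain ⟨y, hy⟩ : ∃ y, Q y ≠ 0 := by
    by_contra! h
    exact hQ (QuadraticMap.ext h)
  intro x
  by_contra hx
  have hzero : ∀ᶠ s : ℝ in 𝓝 0, Q (x + s • y) = 0 := by
    rw [mem_closure_iff_frequently, not_frequently] at hx
    have hcont : Tendsto (fun s : ℝ => x + s • y) (𝓝 0) (𝓝 x) :=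
      Continuous.tendsto' (by fun_prop) _ _ (by simp)
    exact (hcont.eventually hx).mono fun s hs => not_not.1 hs
  have hzero_neg : ∀ᶠ s : ℝ in 𝓝 0, Q (x + (-s) • y) = 0 :=
    (continuous_neg.tendsto' 0 0 neg_zero).eventually hzero
  obtain ⟨s, ⟨hs, hs_neg⟩, hs_pos⟩ :=
    (((hzero.and hzero_neg).filter_mono nhdsWithin_le_nhds).and
      (self_mem_nhdsWithin (s := Ioi (0 : ℝ)))).exists
  have hx0 : Q x = 0 := by simpa using hzero.self_of_nhds
  rw [quadraticForm_add_smul, hx0] at hs hs_neg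
  have hsy : s ^ 2 * Q y = 0 := by linear_combination (hs + hs_neg) / 2
  exact hy ((mul_eq_zero.1 hsy).resolve_left (pow_ne_zero 2 (ne_of_gt hs_pos)))

theorem isConic_of_quadraticForm_eq_zero_on_frontier (hK : Convex ℝ K) (hKc : IsClosed K)
    (hKi : (interior K).Nonempty) (h0 : (0 : E) ∈ K) {Q : QuadraticForm ℝ E} (hQ : Q ≠ 0)
    (hfr : ∀ x ∈ frontier K, Q x = 0) : IsConic K := by
  intro x hx t ht
  -- A ray on which `Q` does not vanish cannot cross the frontier.
  have hray : ∀ y ∈ interior K ∩ {y | Q y ≠ 0}, t • y ∈ K := by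
    rintro y ⟨hyK, hQy⟩
    by_contra hty
    have ht1 : 1 ≤ t := by
      by_contra! ht1
      exact hty (hK.smul_mem_of_zero_mem h0 (interior_subset hyK) ⟨ht, ht1.le⟩)
    obtain ⟨s, hs, hsy⟩ := exists_add_smul_mem_frontier (x := 0) (v := y) (a := 1) (b := t)
      (by simpa using interior_subset hyK) (by simpa using hty)
    rw [uIcc_of_le ht1] at hs
    have hQs := hfr _ hsy
    rw [zero_add, QuadraticMap.map_smul, smul_eq_mul, mul_eq_zero] at hQs
    exact hQs.elim (fun hss => by nlinarith [hs.1]) hQy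
  have hdense : x ∈ closure (interior K ∩ {y | Q y ≠ 0}) := by
    refine closure_minimal ((dense_setOf_quadraticForm_ne_zero hQ).open_subset_closure_inter
      isOpen_interior) isClosed_closure ?_
    rw [hK.closure_interior_eq_closure_of_nonempty_interior hKi]
    exact subset_closure hx
  exact hKc.closure_subset_iff.2 (image_subset_iff.2 hray)
    (image_closure_subset_closure_image (continuous_const_smul t) (mem_image_of_mem _ hdense))

theorem eq_zero_of_forall_exists_mul_add_eq_zero {φ : ℝ → ℝ} {a : ℝ}
    (hφ : ContinuousOn φ (Icc 0 1))
    (h : ∀ ε ∈ Ioo (0 : ℝ) 1, ∃ s ∈ Icc (0 : ℝ) 1, ε * φ s + a = 0) : a = 0 := by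
  obtain ⟨C, hC⟩ := isCompact_Icc.exists_bound_of_continuousOn hφ
  have hbound : ∀ᶠ ε : ℝ in 𝓝[>] 0, |a| ≤ ε * C := by
    filter_upwards [Ioo_mem_nhdsGT zero_lt_one] with ε hε
    obtain ⟨s, hs, hsa⟩ := h ε hε
    rw [eq_neg_of_add_eq_zero_right hsa, abs_neg, abs_mul, abs_of_pos hε.1]
    exact mul_le_mul_of_nonneg_left (hC s hs) hε.1.le
  have hlim : Tendsto (fun ε : ℝ => ε * C) (𝓝[>] 0) (𝓝 0) :=
    (Continuous.tendsto' (by fun_prop) 0 0 (zero_mul C)).mono_left nhdsWithin_le_nhds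
  exact abs_nonpos_iff.1 (ge_of_tendsto hlim hbound)

variable {Q : QuadraticForm ℝ E} {L : Dual ℝ E}

-- Along `y` one leaves `K` from each `ε • x`, and the equation at the exit point, divided by `ε`,
-- tends to `L x = 0`.
theorem linearPart_eq_zero_of_functional_neg (hK : Convex ℝ K) (h0 : (0 : E) ∈ K)
    (hfr : ∀ x ∈ frontier K, Q x + L x = 0) {f : Dual ℝ E} (hf : ∀ x ∈ K, 0 ≤ f x) {y : E}
    (hLy : L y = 0) (hfy : f y < 0) {x : E} (hx : x ∈ K) : L x = 0 := by
  obtain ⟨c, hc⟩ : ∃ c : ℝ, f x + c * f y < 0 := by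
    refine ⟨-(f x + 1) / f y, ?_⟩
    rw [div_mul_cancel₀ _ hfy.ne]
    linarith
  refine eq_zero_of_forall_exists_mul_add_eq_zero (φ := fun s => Q (x + s • c • y))
    (by simp only [quadraticForm_add_smul]; fun_prop) fun ε hε => ?_
  have hout : ε • x + (1 : ℝ) • ε • c • y ∉ K := fun hmem => by
    have h := hf _ hmem
    simp only [map_add, map_smul, smul_eq_mul] at h
    nlinarith [hε.1]
  obtain ⟨s, hs, hexit⟩ := exists_add_smul_mem_frontier (a := 0)
    (by simpa using hK.smul_mem_of_zero_mem h0 hx ⟨hε.1.le, hε.2.le⟩) hout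
  rw [uIcc_of_le zero_le_one] at hs
  refine ⟨s, hs, mul_left_cancel₀ hε.1.ne' ?_⟩
  have h := hfr _ hexit
  rw [show ε • x + s • ε • c • y = ε • (x + s • c • y) by module, QuadraticMap.map_smul,
    map_smul L, map_add L, map_smul L, map_smul L, hLy] at h
  simp only [smul_eq_mul] at h
  linear_combination h

theorem linearPart_eq_zero_of_two_functionals (hK : Convex ℝ K) (hKi : (interior K).Nonempty)
    (h0 : (0 : E) ∈ K) (hfr : ∀ x ∈ frontier K, Q x + L x = 0) {f g : Dual ℝ E}
    (hf : ∀ x ∈ K, 0 ≤ f x) (hg : ∀ x ∈ K, 0 ≤ g x) (hf0 : f ≠ 0) {x : E} (hfx : f x = 0)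
    (hgx : g x ≠ 0) : L = 0 := by
  by_contra hL
  have hker : ∀ {h : Dual ℝ E}, (∀ k ∈ K, 0 ≤ h k) → ∀ y, L y = 0 → h y = 0 := by
    intro h hh y hLy
    by_contra hy
    refine hL (eq_zero_of_forall_mem_eq_zero hKi fun k hk => ?_)
    rcases lt_or_gt_of_ne hy with hneg | hpos
    · exact linearPart_eq_zero_of_functional_neg hK h0 hfr hh hLy hneg hk
    · exact linearPart_eq_zero_of_functional_neg hK h0 hfr hh (y := -y) (by simp [hLy])
        (by simpa using hpos) hk
  have hLx : L x ≠ 0 := fun hLx => hgx (hker hg x hLx)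
  refine hf0 (LinearMap.ext fun v => ?_)
  have hv := hker hf (v - (L v / L x) • x) (by simp [hLx])
  simpa [hfx] using hv

theorem linearPart_eq_zero_of_isotropic_ray (hK : Convex ℝ K) (hKc : IsClosed K)
    (hKi : (interior K).Nonempty) (h0 : (0 : E) ∈ K) (hfr : ∀ x ∈ frontier K, Q x + L x = 0) {d : E}
    (hQd : Q d = 0) (hLd : L d = 0) (hd : ∀ s : ℝ, 0 < s → s • d ∉ K) : L = 0 := by
  refine eq_zero_of_forall_mem_eq_zero (K := interior K) (by rwa [interior_interior]) fun x hx => ?_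
  obtain ⟨r, hr, hxr⟩ := exists_pos_add_smul_mem_interior hx d
  have hxr := interior_subset hxr
  refine eq_zero_of_forall_exists_mul_add_eq_zero
    (φ := fun s => s * Q x + QuadraticMap.polar Q x (r • d)) (by fun_prop) fun ε hε => ?_
  have hout : ε • r • d + (0 : ℝ) • ε • x ∉ K := by
    simpa [smul_smul] using hd _ (mul_pos hε.1 hr)
  obtain ⟨s, hs, hexit⟩ := exists_add_smul_mem_frontier (a := 1)
    (by simpa [add_comm] using hK.smul_mem_of_zero_mem h0 hxr ⟨hε.1.le, hε.2.le⟩) hout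
  rw [uIcc_of_ge zero_le_one] at hs
  have hs0 : s ≠ 0 := by
    rintro rfl
    exact hout (hKc.frontier_subset hexit)
  refine ⟨s, hs, mul_left_cancel₀ (mul_ne_zero hε.1.ne' hs0) ?_⟩
  have h := hfr _ hexit
  rw [show ε • r • d + s • ε • x = ε • (r • d + s • x) by module, QuadraticMap.map_smul,
    quadraticForm_add_smul, QuadraticMap.polar_comm, QuadraticMap.map_smul, hQd] at h
  simp only [map_add, map_smul, smul_eq_mul, hLd] at h
  linear_combination h

end QuadraticBoundary

section DualCone

theorem isConic_properCone {E : Type*} [NormedAddCommGroup E] [NormedSpace ℝ E]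
    (C : ProperCone ℝ E) : IsConic (C : Set E) :=
  fun _ hx _ ht => C.smul_mem hx ht

variable {E : Type*} [NormedAddCommGroup E] [InnerProductSpace ℝ E] [CompleteSpace E]
  {K : Set E}

theorem inner_pos_of_mem_interior {ν z : E} (hν : ν ∈ ProperCone.innerDual K) (hν0 : ν ≠ 0)
    (hz : z ∈ interior K) : 0 < ⟪z, ν⟫ := by
  obtain ⟨s, hs, hzs⟩ := exists_pos_add_smul_mem_interior hz (-ν)
  have h := ProperCone.mem_innerDual.1 hν (interior_subset hzs)
  rw [inner_add_left, real_inner_smul_left, inner_neg_left] at h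
  nlinarith [mul_pos hs (real_inner_self_pos.2 hν0)]

theorem notMem_interior_of_inner_eq_zero {ν x : E} (hν : ν ∈ ProperCone.innerDual K) (hν0 : ν ≠ 0)
    (hx : ⟪x, ν⟫ = 0) : x ∉ interior K :=
  fun hmem => (inner_pos_of_mem_interior hν hν0 hmem).ne' hx

/-- The closed convex cone generated by `K`, as a double dual. For convex `K ∋ 0` it is the tangent
cone of `K` at `0`. -/
def tangentCone (K : Set E) : ProperCone ℝ E :=
  ProperCone.innerDual (ProperCone.innerDual K : Set E)

theorem subset_tangentCone : K ⊆ tangentCone K := fun x hx =>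
  ProperCone.mem_innerDual.2 fun ν hν => by
    rw [real_inner_comm]
    exact ProperCone.mem_innerDual.1 hν hx

theorem inner_nonneg_of_mem_tangentCone {x ν : E} (hx : x ∈ tangentCone K)
    (hν : ν ∈ ProperCone.innerDual K) : 0 ≤ ⟪x, ν⟫ := by
  rw [real_inner_comm]
  exact ProperCone.mem_innerDual.1 hx hν

theorem exists_supporting_normal (hK : Convex ℝ K) (hKi : (interior K).Nonempty) {x : E}
    (hx : x ∉ interior K) : ∃ ν : E, ν ≠ 0 ∧ ∀ k ∈ K, ⟪x, ν⟫ ≤ ⟪k, ν⟫ := by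
  obtain ⟨f, hf0, hf⟩ := geometric_hahn_banach_of_nonempty_interior_point hK hx hKi
  refine ⟨-(InnerProductSpace.toDual ℝ E).symm f, by simpa using hf0, fun k hk => ?_⟩
  rw [inner_neg_right, inner_neg_right, neg_le_neg_iff, real_inner_comm _ k, real_inner_comm _ x,
    InnerProductSpace.toDual_symm_apply, InnerProductSpace.toDual_symm_apply]
  exact hf k hk

theorem exists_normal_of_isConic (hK : Convex ℝ K) (hKi : (interior K).Nonempty)
    (hcone : IsConic K) {x : E} (hx : x ∉ interior K) :
    ∃ ν ∈ ProperCone.innerDual K, ν ≠ 0 ∧ ⟪x, ν⟫ ≤ 0 := by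
  obtain ⟨ν, hν0, hν⟩ := exists_supporting_normal hK hKi hx
  obtain ⟨z, hz⟩ := hKi
  refine ⟨ν, ProperCone.mem_innerDual.2 fun k hk => ?_, hν0, ?_⟩
  · by_contra! hneg
    have h := hν _ (hcone k hk ((|⟪x, ν⟫| + 1) / -⟪k, ν⟫) (by have := neg_pos.2 hneg; positivity))
    rw [real_inner_smul_left, div_neg, neg_mul, div_mul_cancel₀ _ hneg.ne] at h
    linarith [neg_abs_le ⟪x, ν⟫]
  · simpa using hν _ (hcone z (interior_subset hz) 0 le_rfl)

theorem mem_of_mem_tangentCone_of_isConic_section (hK : Convex ℝ K) (hKc : IsClosed K)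
    {V : Submodule ℝ E} (hcone : IsConic ((↑) ⁻¹' K : Set V)) {z : E} (hz : z ∈ interior K)
    (hzV : z ∈ V) {x : E} (hxV : x ∈ V) (hx : x ∈ tangentCone K) : x ∈ K := by
  refine mem_of_forall_pos_add_smul_mem hKc (v := z) fun ε hε => ?_
  by_contra hout
  have hinterior : interior K ⊆ interior (ConvexCone.hull ℝ K : Set E) :=
    interior_mono ConvexCone.subset_hull
  have h0 : (0 : E) ∈ K := by simpa using hcone ⟨z, hzV⟩ (interior_subset hz : z ∈ K) 0 le_rfl
  have hhull : IsConic (ConvexCone.hull ℝ K : Set E) := fun y hy t ht => by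
    rcases ht.eq_or_lt with rfl | ht
    · simpa using ConvexCone.subset_hull h0
    · exact ConvexCone.smul_mem _ ht hy
  have hout_hull : x + ε • z ∉ (ConvexCone.hull ℝ K : Set E) := fun hmem => by
    obtain ⟨t, ht, y, hy, hty : t • y = x + ε • z⟩ := (ConvexCone.mem_hull_of_convex hK).1 hmem
    have hyV : y ∈ V := by
      rw [← V.smul_mem_iff ht.ne', hty]
      exact V.add_mem hxV (V.smul_mem ε hzV)
    exact hout (hty ▸ hcone ⟨y, hyV⟩ hy t ht.le)
  obtain ⟨ν, hν, hν0, hle⟩ := exists_normal_of_isConic (ConvexCone.convex _)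
    ⟨z, hinterior hz⟩ hhull fun h => hout_hull (interior_subset h)
  have hνK : ν ∈ ProperCone.innerDual K :=
    ProperCone.mem_innerDual.2 fun k hk =>
      ProperCone.mem_innerDual.1 hν (ConvexCone.subset_hull hk)
  rw [inner_add_left, real_inner_smul_left] at hle
  linarith [inner_nonneg_of_mem_tangentCone hx hνK,
    mul_pos hε (inner_pos_of_mem_interior hνK hν0 hz)]

end DualCone

section QuadraticSections

variable {E : Type*} [NormedAddCommGroup E] [InnerProductSpace ℝ E] {K : Set E}

/-- The hyperplane `⟪x, u⟫ = r` meets the interior of `K`, and its points on the frontier of `K`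
satisfy a polynomial equation of degree two, whose quadratic part is required not to vanish on the
direction `uᗮ` of the hyperplane. -/
structure HasQuadraticSection (K : Set E) (u : E) (r : ℝ) : Prop where
  exists_mem_interior : ∃ z ∈ interior K, ⟪z, u⟫ = r
  exists_quadratic_equation : ∃ (Q : QuadraticForm ℝ E) (L : Dual ℝ E) (c : ℝ),
    (∃ y, ⟪y, u⟫ = 0 ∧ Q y ≠ 0) ∧ ∀ x ∈ frontier K, ⟪x, u⟫ = r → Q x + L x + c = 0

/-- A closed convex set with nonempty interior, all of whose sections by the hyperplanes
`⟪x, u⟫ = δ u`, for a continuous `δ`, are quadratic. -/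
structure IsQuadricallySectioned (K : Set E) (δ : sphere (0 : E) 1 → ℝ) : Prop where
  convex : Convex ℝ K
  isClosed : IsClosed K
  nonempty_interior : (interior K).Nonempty
  continuous : Continuous δ
  section_at : ∀ u : sphere (0 : E) 1, HasQuadraticSection K u (δ u)

theorem exists_quadraticForm_translate {M : Type*} [AddCommGroup M] [Module ℝ M]
    (Q : QuadraticForm ℝ M) (L : Dual ℝ M) (c : ℝ) (p : M) :
    ∃ (L' : Dual ℝ M) (c' : ℝ), ∀ x, Q (p + x) + L (p + x) + c = Q x + L' x + c' :=
  ⟨L + Q.polarBilin p, Q p + L p + c, fun x => by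
    rw [QuadraticMap.map_add Q, map_add L, LinearMap.add_apply, QuadraticMap.polarBilin_apply_apply]
    ring⟩

theorem frontier_vadd_set {V P : Type*} [AddGroup V] [TopologicalSpace P] [AddAction V P]
    [ContinuousConstVAdd V P] (v : V) (K : Set P) : frontier (v +ᵥ K) = v +ᵥ frontier K := by
  simp only [← Set.image_vadd]
  exact ((Homeomorph.vadd v).image_frontier K).symm

theorem hasQuadraticSection_neg_vadd {u : E} {r : ℝ} (hsec : HasQuadraticSection K u r) (p : E) :
    HasQuadraticSection (-p +ᵥ K) u (r - ⟪p, u⟫) := by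
  obtain ⟨⟨z, hz, hzu⟩, Q, L, c, hQ, hfr⟩ := hsec
  obtain ⟨L', c', htranslate⟩ := exists_quadraticForm_translate Q L c p
  refine ⟨⟨z - p, ?_, by rw [inner_sub_left, hzu]⟩, Q, L', c', hQ, fun x hx hxu => ?_⟩
  · rw [interior_vadd, mem_neg_vadd_set_iff, vadd_eq_add, add_sub_cancel]
    exact hz
  · rw [frontier_vadd_set, mem_neg_vadd_set_iff, vadd_eq_add] at hx
    rw [← htranslate, hfr _ hx (by rw [inner_add_left, hxu, add_sub_cancel])]

theorem isQuadricallySectioned_neg_vadd {δ : sphere (0 : E) 1 → ℝ} (h : IsQuadricallySectioned K δ)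
    (p : E) : IsQuadricallySectioned (-p +ᵥ K) fun u => δ u - ⟪p, (u : E)⟫ where
  convex := h.convex.vadd _
  isClosed := h.isClosed.vadd _
  nonempty_interior := by
    simpa only [interior_vadd, Set.vadd_set_nonempty] using h.nonempty_interior
  continuous := h.continuous.sub (by fun_prop)
  section_at u := hasQuadraticSection_neg_vadd (h.section_at u) p

theorem exists_mem_orthogonal_mem_interior {u : E} (hsec : HasQuadraticSection K u 0) :
    ∃ z ∈ interior K, z ∈ (ℝ ∙ u)ᗮ := by
  obtain ⟨z, hz, hzu⟩ := hsec.exists_mem_interior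
  exact ⟨z, hz, Submodule.mem_orthogonal_singleton_iff_inner_left.2 hzu⟩

theorem nonempty_interior_section {u : E} (hsec : HasQuadraticSection K u 0) :
    (interior ((↑) ⁻¹' K : Set (ℝ ∙ u)ᗮ)).Nonempty := by
  obtain ⟨z, hz, hzu⟩ := exists_mem_orthogonal_mem_interior hsec
  exact ⟨⟨z, hzu⟩, preimage_interior_subset_interior_preimage continuous_subtype_val hz⟩

theorem exists_quadratic_equation_on_section {u : E} (hsec : HasQuadraticSection K u 0)
    (h0 : (0 : E) ∈ frontier K) :
    ∃ (Q : QuadraticForm ℝ (ℝ ∙ u)ᗮ) (L : Dual ℝ (ℝ ∙ u)ᗮ),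
      Q ≠ 0 ∧ ∀ x : (ℝ ∙ u)ᗮ, (x : E) ∈ frontier K → Q x + L x = 0 := by
  obtain ⟨Q, L, c, ⟨y, hyu, hy⟩, hfr⟩ := hsec.exists_quadratic_equation
  have hc : c = 0 := by simpa using hfr 0 h0 (inner_zero_left u)
  refine ⟨Q.comp (Submodule.subtype _), L ∘ₗ Submodule.subtype _, fun hQ => hy ?_,
    fun x hx => ?_⟩
  · exact DFunLike.congr_fun hQ ⟨y, Submodule.mem_orthogonal_singleton_iff_inner_left.2 hyu⟩
  · simpa [hc] using hfr x hx (Submodule.mem_orthogonal_singleton_iff_inner_left.1 x.2)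

theorem isConic_section (hK : Convex ℝ K) (hKc : IsClosed K) {u : E}
    (hsec : HasQuadraticSection K u 0) (h0 : (0 : E) ∈ frontier K)
    (hL : ∀ (Q : QuadraticForm ℝ (ℝ ∙ u)ᗮ) (L : Dual ℝ (ℝ ∙ u)ᗮ),
      (∀ x : (ℝ ∙ u)ᗮ, (x : E) ∈ frontier K → Q x + L x = 0) → L = 0) :
    IsConic ((↑) ⁻¹' K : Set (ℝ ∙ u)ᗮ) := by
  obtain ⟨Q, L, hQ, hfr⟩ := exists_quadratic_equation_on_section hsec h0
  refine isConic_of_quadraticForm_eq_zero_on_frontier (hK.linear_preimage (Submodule.subtype _))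
    (hKc.preimage continuous_subtype_val) (nonempty_interior_section hsec)
    (hKc.frontier_subset h0) hQ fun x hx => ?_
  simpa [hL Q L hfr] using hfr x (continuous_subtype_val.frontier_preimage_subset K hx)

theorem isConic_section_of_two_normals [CompleteSpace E] (hK : Convex ℝ K) (hKc : IsClosed K)
    {u : E} (hsec : HasQuadraticSection K u 0) (h0 : (0 : E) ∈ frontier K) {ν ν' x : E}
    (hν : ν ∈ ProperCone.innerDual K) (hν' : ν' ∈ ProperCone.innerDual K)
    (hνu : ν ∉ ℝ ∙ u) (hxu : ⟪x, u⟫ = 0) (hxν : ⟪x, ν⟫ = 0) (hxν' : ⟪x, ν'⟫ ≠ 0) :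
    IsConic ((↑) ⁻¹' K : Set (ℝ ∙ u)ᗮ) := by
  refine isConic_section hK hKc hsec h0 fun Q L hfr => ?_
  let restrictInner (μ : E) : Dual ℝ (ℝ ∙ u)ᗮ := (innerₛₗ ℝ μ) ∘ₗ Submodule.subtype _
  have hnonneg : ∀ μ ∈ ProperCone.innerDual K, ∀ y ∈ ((↑) ⁻¹' K : Set (ℝ ∙ u)ᗮ),
      0 ≤ restrictInner μ y := fun μ hμ y hy => by
    simpa [restrictInner, real_inner_comm] using ProperCone.mem_innerDual.1 hμ hy
  refine linearPart_eq_zero_of_two_functionals (hK.linear_preimage (Submodule.subtype _))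
    (nonempty_interior_section hsec) (hKc.frontier_subset h0)
    (fun y hy => hfr y (continuous_subtype_val.frontier_preimage_subset K hy))
    (hnonneg ν hν) (hnonneg ν' hν') (fun hzero => hνu ?_)
    (x := ⟨x, Submodule.mem_orthogonal_singleton_iff_inner_left.2 hxu⟩)
    (by simpa [restrictInner, real_inner_comm] using hxν)
    (by simpa [restrictInner, real_inner_comm] using hxν')
  rw [← Submodule.orthogonal_orthogonal (ℝ ∙ u), Submodule.mem_orthogonal']
  exact fun y hy => by simpa [restrictInner] using DFunLike.congr_fun hzero ⟨y, hy⟩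

theorem isConic_section_of_segment (hK : Convex ℝ K) (hKc : IsClosed K) {u : E}
    (hsec : HasQuadraticSection K u 0) (h0 : (0 : E) ∈ frontier K) {d : E} (hdu : ⟪d, u⟫ = 0)
    (hsegment : ∀ s ∈ Icc (0 : ℝ) 1, -(s • d) ∈ frontier K) (hd : ∀ s : ℝ, 0 < s → s • d ∉ K) :
    IsConic ((↑) ⁻¹' K : Set (ℝ ∙ u)ᗮ) := by
  refine isConic_section hK hKc hsec h0 fun Q L hfr => ?_
  set d' : (ℝ ∙ u)ᗮ := ⟨d, Submodule.mem_orthogonal_singleton_iff_inner_left.2 hdu⟩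
  have heq : ∀ s ∈ Icc (0 : ℝ) 1, s * s * Q d' - s * L d' = 0 := fun s hs => by
    simpa [QuadraticMap.map_neg, QuadraticMap.map_smul, sub_eq_add_neg] using
      hfr (-(s • d')) (hsegment s hs)
  have hone := heq 1 (by norm_num)
  have hhalf := heq (1 / 2) (by norm_num)
  exact linearPart_eq_zero_of_isotropic_ray (hK.linear_preimage (Submodule.subtype _))
    (hKc.preimage continuous_subtype_val) (nonempty_interior_section hsec)
    (hKc.frontier_subset h0)
    (fun y hy => hfr y (continuous_subtype_val.frontier_preimage_subset K hy))
    (d := d') (by linarith) (by linarith) hd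

end QuadraticSections

section HalfCircle

variable {E : Type*} [NormedAddCommGroup E] [InnerProductSpace ℝ E]

theorem exists_unit_mem_orthogonal [FiniteDimensional ℝ E] {V : Submodule ℝ E}
    (hV : finrank ℝ V < finrank ℝ E) : ∃ e ∈ Vᗮ, ‖e‖ = 1 := by
  have hne : Vᗮ ≠ ⊥ := fun h => by
    rw [Submodule.orthogonal_eq_bot_iff] at h
    rw [h, finrank_top] at hV
    exact hV.false
  obtain ⟨v, hv, hv0⟩ := Submodule.exists_mem_ne_zero_of_ne_bot hne
  exact ⟨_, Submodule.smul_mem _ (‖v‖⁻¹) hv, norm_smul_inv_norm hv0⟩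

theorem exists_unit_inner_eq_zero_inner_eq_zero [FiniteDimensional ℝ E] (hE : 3 ≤ finrank ℝ E)
    (a b : E) : ∃ e : E, ‖e‖ = 1 ∧ ⟪a, e⟫ = 0 ∧ ⟪b, e⟫ = 0 := by
  classical
  have hrank : finrank ℝ (Submodule.span ℝ {a, b}) ≤ 2 := by
    have hcard := finrank_span_finset_le_card (R := ℝ) {a, b}
    rw [Finset.coe_pair] at hcard
    exact hcard.trans Finset.card_le_two
  obtain ⟨e, he, hnorm⟩ := exists_unit_mem_orthogonal (hrank.trans_lt hE)
  rw [Submodule.mem_orthogonal] at he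
  exact ⟨e, hnorm, he a (Submodule.subset_span (by simp)), he b (Submodule.subset_span (by simp))⟩

theorem exists_inner_neg_inner_pos {a b : E} (hab : LinearIndependent ℝ ![a, b]) :
    ∃ d : E, ⟪d, a⟫ < 0 ∧ 0 < ⟪d, b⟫ := by
  have ha : 0 < ‖a‖ := norm_pos_iff.2 (by simpa using hab.ne_zero 0)
  have hb : 0 < ‖b‖ := norm_pos_iff.2 (by simpa using hab.ne_zero 1)
  have hlt : ⟪a, b⟫ < ‖a‖ * ‖b‖ := inner_lt_norm_mul_iff_real.2 fun heq =>
    hb.ne' (LinearIndependent.pair_iff.1 hab ‖b‖ (-‖a‖) (by rw [heq]; module)).1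
  refine ⟨‖a‖ • b - ‖b‖ • a, ?_, ?_⟩ <;>
    rw [inner_sub_left, real_inner_smul_left, real_inner_smul_left, real_inner_self_eq_norm_sq]
  · rw [real_inner_comm]
    nlinarith
  · nlinarith

theorem norm_cos_smul_add_sin_smul {a e : E} (ha : ‖a‖ = 1) (he : ‖e‖ = 1) (hae : ⟪a, e⟫ = 0)
    (θ : ℝ) : ‖Real.cos θ • a + Real.sin θ • e‖ = 1 := by
  rw [← sq_eq_sq₀ (norm_nonneg _) zero_le_one, norm_add_sq_real, real_inner_smul_left,
    real_inner_smul_right, hae, norm_smul, norm_smul, ha, he]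
  simp

theorem exists_zero_of_sign_change_on_half_circle {δ : sphere (0 : E) 1 → ℝ} (hδ : Continuous δ)
    {a : sphere (0 : E) 1} {e : E} (he : ‖e‖ = 1) (hae : ⟪(a : E), e⟫ = 0) (hpos : 0 < δ a)
    (hneg : δ (-a) < 0) :
    ∃ (w : sphere (0 : E) 1) (s t : ℝ), (w : E) = s • (a : E) + t • e ∧ t ≠ 0 ∧ δ w = 0 := by
  let w (θ : ℝ) : sphere (0 : E) 1 := ⟨Real.cos θ • (a : E) + Real.sin θ • e,
    mem_sphere_zero_iff_norm.2 (norm_cos_smul_add_sin_smul (norm_eq_of_mem_sphere a) he hae θ)⟩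
  have hw : Continuous w := Continuous.subtype_mk (by fun_prop) _
  have hw_zero : w 0 = a := Subtype.ext (by simp [w])
  have hw_pi : w Real.pi = -a := Subtype.ext (by simp [w])
  obtain ⟨θ, hθ, hδθ⟩ := intermediate_value_Ioo' Real.pi_pos.le (hδ.comp hw).continuousOn
    (show (0 : ℝ) ∈ Ioo _ _ by simpa [hw_zero, hw_pi] using And.intro hneg hpos)
  exact ⟨w θ, _, _, rfl, (Real.sin_pos_of_mem_Ioo hθ).ne', hδθ⟩

theorem exists_central_section_direction [FiniteDimensional ℝ E] (hE : 3 ≤ finrank ℝ E) {K : Set E}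
    {δ : sphere (0 : E) 1 → ℝ} (h : IsQuadricallySectioned K δ) {ν d : E}
    (hν : ν ∈ ProperCone.innerDual K) (hν0 : ν ≠ 0) (hdν : ⟪d, ν⟫ = 0) :
    ∃ w : sphere (0 : E) 1, ⟪d, (w : E)⟫ = 0 ∧ δ w = 0 ∧ ν ∉ ℝ ∙ (w : E) := by
  obtain ⟨e, he, hνe, hde⟩ := exists_unit_inner_eq_zero_inner_eq_zero hE ν d
  let a : sphere (0 : E) 1 := ⟨‖ν‖⁻¹ • ν, mem_sphere_zero_iff_norm.2 (norm_smul_inv_norm hν0)⟩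
  have hinner_pos : ∀ z ∈ interior K, 0 < ⟪z, (a : E)⟫ := fun z hz => by
    rw [real_inner_smul_right]
    exact mul_pos (inv_pos.2 (norm_pos_iff.2 hν0)) (inner_pos_of_mem_interior hν hν0 hz)
  have hpos : 0 < δ a := by
    obtain ⟨z, hz, hzδ⟩ := (h.section_at a).exists_mem_interior
    exact hzδ ▸ hinner_pos z hz
  have hneg : δ (-a) < 0 := by
    obtain ⟨z, hz, hzδ⟩ := (h.section_at (-a)).exists_mem_interior
    rw [← hzδ, coe_neg_sphere, inner_neg_right]
    exact neg_neg_of_pos (hinner_pos z hz)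
  have hae : ⟪(a : E), e⟫ = 0 := by rw [real_inner_smul_left, hνe, mul_zero]
  obtain ⟨w, s, t, hw, ht, hδw⟩ :=
    exists_zero_of_sign_change_on_half_circle h.continuous he hae hpos hneg
  refine ⟨w, ?_, hδw, fun hmem => ?_⟩
  · rw [hw, inner_add_right, real_inner_smul_right, real_inner_smul_right, real_inner_smul_right,
      hdν, hde]
    ring
  · obtain ⟨c, rfl⟩ := Submodule.mem_span_singleton.1 hmem
    have hew : ⟪(w : E), e⟫ = t := by
      rw [hw, inner_add_left, real_inner_smul_left (a : E), real_inner_smul_left e, hae,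
        real_inner_self_eq_norm_sq, he]
      ring
    rw [real_inner_smul_left, hew] at hνe
    exact hν0 (by rw [(mul_eq_zero.1 hνe).resolve_right ht, zero_smul])

end HalfCircle

section TangentConeEq

variable {E : Type*} [NormedAddCommGroup E] [InnerProductSpace ℝ E] [FiniteDimensional ℝ E]
  {K : Set E} {δ : sphere (0 : E) 1 → ℝ}

theorem nonempty_interior_tangentCone (hKi : (interior K).Nonempty) :
    (interior (tangentCone K : Set E)).Nonempty :=
  hKi.mono (interior_mono subset_tangentCone)

theorem exists_normal_of_mem_frontier_tangentCone (hKi : (interior K).Nonempty) {x : E}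
    (hx : x ∈ frontier (tangentCone K : Set E)) :
    ∃ ν ∈ ProperCone.innerDual K, ν ≠ 0 ∧ ⟪x, ν⟫ = 0 := by
  rw [(tangentCone K).isClosed.frontier_eq] at hx
  obtain ⟨ν, hν, hν0, hle⟩ := exists_normal_of_isConic (tangentCone K).convex
    (nonempty_interior_tangentCone hKi) (isConic_properCone _) hx.2
  exact ⟨ν, ProperCone.mem_innerDual.2 fun k hk =>
    ProperCone.mem_innerDual.1 hν (subset_tangentCone hk), hν0,
    hle.antisymm (ProperCone.mem_innerDual.1 hν hx.1)⟩

theorem mem_of_mem_frontier_tangentCone (hE : 3 ≤ finrank ℝ E) (h : IsQuadricallySectioned K δ)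
    (h0 : (0 : E) ∈ frontier K) {x ν' : E}
    (hx : x ∈ frontier (tangentCone K : Set E)) (hν' : ν' ∈ ProperCone.innerDual K)
    (hxν' : ⟪x, ν'⟫ ≠ 0) : x ∈ K := by
  obtain ⟨ν, hν, hν0, hxν⟩ := exists_normal_of_mem_frontier_tangentCone h.nonempty_interior hx
  obtain ⟨w, hxw, hδw, hνw⟩ := exists_central_section_direction hE h hν hν0 hxν
  have hsecw : HasQuadraticSection K w 0 := hδw ▸ h.section_at w
  obtain ⟨z, hz, hzw⟩ := exists_mem_orthogonal_mem_interior hsecw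
  exact mem_of_mem_tangentCone_of_isConic_section h.convex h.isClosed
    (isConic_section_of_two_normals h.convex h.isClosed hsecw h0 hν hν' hνw hxw hxν hxν') hz hzw
    (Submodule.mem_orthogonal_singleton_iff_inner_left.2 hxw)
    ((tangentCone K).isClosed.frontier_subset hx)

theorem exists_nonneg_add_smul_mem (hE : 3 ≤ finrank ℝ E) (h : IsQuadricallySectioned K δ)
    (h0 : (0 : E) ∈ frontier K) {y d ν₀ ν₁ : E}
    (hy : y ∈ tangentCone K) (hν₀ : ν₀ ∈ ProperCone.innerDual K)
    (hν₁ : ν₁ ∈ ProperCone.innerDual K) (hyν₁ : 0 < ⟪y, ν₁⟫) (hdν₀ : ⟪d, ν₀⟫ < 0)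
    (hdν₁ : 0 ≤ ⟪d, ν₁⟫) : ∃ s : ℝ, 0 ≤ s ∧ y + s • d ∈ K := by
  set b : ℝ := (⟪y, ν₀⟫ + 1) / -⟪d, ν₀⟫ with hb
  have hb0 : 0 ≤ b :=
    div_nonneg (by linarith [inner_nonneg_of_mem_tangentCone hy hν₀]) (by linarith)
  have hout : y + b • d ∉ (tangentCone K : Set E) := fun hmem => by
    have hnonneg := inner_nonneg_of_mem_tangentCone hmem hν₀
    rw [inner_add_left, real_inner_smul_left, hb, div_neg, neg_mul,
      div_mul_cancel₀ _ hdν₀.ne] at hnonneg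
    linarith
  obtain ⟨s, hs, hexit⟩ := exists_add_smul_mem_frontier (a := 0) (by simpa using hy) hout
  rw [uIcc_of_le hb0] at hs
  refine ⟨s, hs.1, mem_of_mem_frontier_tangentCone hE h h0 hexit hν₁ ?_⟩
  rw [inner_add_left, real_inner_smul_left]
  nlinarith [mul_nonneg hs.1 hdν₁]

theorem coe_tangentCone_eq (hE : 3 ≤ finrank ℝ E) (h : IsQuadricallySectioned K δ)
    (h0 : (0 : E) ∈ frontier K) {ν₀ ν₁ : E}
    (hν₀ : ν₀ ∈ ProperCone.innerDual K) (hν₁ : ν₁ ∈ ProperCone.innerDual K)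
    (hind : LinearIndependent ℝ ![ν₀, ν₁]) : (tangentCone K : Set E) = K := by
  obtain ⟨d, hdν₀, hdν₁⟩ := exists_inner_neg_inner_pos hind
  have hpos_mem : ∀ y ∈ tangentCone K, 0 < ⟪y, ν₀⟫ → 0 < ⟪y, ν₁⟫ → y ∈ K := fun y hy hy₀ hy₁ => by
    obtain ⟨s, hs, hsK⟩ :=
      exists_nonneg_add_smul_mem hE h h0 hy hν₀ hν₁ hy₁ hdν₀ hdν₁.le
    obtain ⟨t, ht, htK⟩ := exists_nonneg_add_smul_mem hE h h0 (d := -d) hy hν₁ hν₀ hy₀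
      (by simpa using hdν₁) (by simpa using hdν₀.le)
    simpa using (ordConnected_setOf_add_smul_mem h.convex y d).out (x := -t) (by simpa using htK)
      hsK (show (0 : ℝ) ∈ Icc _ _ from ⟨by linarith, hs⟩)
  obtain ⟨z, hz⟩ := h.nonempty_interior
  refine Subset.antisymm (fun x hx => ?_) subset_tangentCone
  refine mem_of_forall_pos_add_smul_mem h.isClosed (v := z) fun ε hε => ?_
  have hpos : ∀ ν ∈ ProperCone.innerDual K, ν ≠ 0 → 0 < ⟪x + ε • z, ν⟫ := fun ν hν hν0 => by
    rw [inner_add_left, real_inner_smul_left]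
    linarith [inner_nonneg_of_mem_tangentCone hx hν,
      mul_pos hε (inner_pos_of_mem_interior hν hν0 hz)]
  exact hpos_mem _ ((tangentCone K).add_mem hx
      ((tangentCone K).smul_mem (subset_tangentCone (interior_subset hz)) hε.le))
    (hpos ν₀ hν₀ (by simpa using hind.ne_zero 0)) (hpos ν₁ hν₁ (by simpa using hind.ne_zero 1))

end TangentConeEq

section QuadraticCone

variable {E : Type*} [NormedAddCommGroup E] [NormedSpace ℝ E] {C : ProperCone ℝ E}

theorem add_mem_interior_of_mem_of_mem_interior {x y : E} (hx : x ∈ C)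
    (hy : y ∈ interior (C : Set E)) : x + y ∈ interior (C : Set E) := by
  refine interior_maximal ?_ (isOpen_interior.vadd x) (Set.vadd_mem_vadd_set hy)
  rintro _ ⟨z, hz, rfl⟩
  exact C.add_mem hx (interior_subset hz)

theorem smul_mem_interior_of_pos {e : E} (he : e ∈ interior (C : Set E)) {t : ℝ} (ht : 0 < t) :
    t • e ∈ interior (C : Set E) := by
  refine interior_maximal ?_ (isOpen_interior.smul₀ ht.ne') (Set.smul_mem_smul_set he)
  rintro _ ⟨z, hz, rfl⟩
  exact C.smul_mem (interior_subset hz) ht.le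

theorem smul_mem_frontier_of_pos {x : E} (hx : x ∈ frontier (C : Set E)) {t : ℝ} (ht : 0 < t) :
    t • x ∈ frontier (C : Set E) := by
  rw [C.isClosed.frontier_eq] at hx ⊢
  refine ⟨C.smul_mem hx.1 ht.le, fun hmem => hx.2 ?_⟩
  simpa [smul_smul, ht.ne'] using smul_mem_interior_of_pos hmem (inv_pos.2 ht)

theorem neg_notMem_of_mem_interior [Nontrivial E] (hC : ∀ x ∈ C, -x ∈ C → x = 0) {e : E}
    (he : e ∈ interior (C : Set E)) : -e ∉ C := by
  intro hneg
  obtain rfl := hC e (interior_subset he) hneg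
  obtain ⟨y, hy⟩ := exists_ne (0 : E)
  obtain ⟨s, hs, hsy⟩ := exists_pos_add_smul_mem_interior he y
  obtain ⟨t, ht, hty⟩ := exists_pos_add_smul_mem_interior he (-y)
  have hmem : ∀ {r : ℝ} {v : E}, 0 < r → 0 + r • v ∈ interior (C : Set E) → v ∈ C :=
    fun {r v} hr hrv => by
      simpa [smul_smul, hr.ne'] using C.smul_mem (interior_subset hrv) (inv_nonneg.2 hr.le)
  exact hy (hC y (hmem hs hsy) (hmem ht hty))

theorem ne_zero_of_mem_interior [Nontrivial E] (hC : ∀ x ∈ C, -x ∈ C → x = 0) {e : E}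
    (he : e ∈ interior (C : Set E)) : e ≠ 0 := by
  rintro rfl
  exact neg_notMem_of_mem_interior hC he (by simp)

theorem exists_forall_add_smul_mem_iff {e : E} (he : e ∈ interior (C : Set E)) (hne : -e ∉ C)
    (d : E) : ∃ s₁ : ℝ, ∀ s : ℝ, d + s • e ∈ C ↔ s₁ ≤ s := by
  set A : Set ℝ := {s | d + s • e ∈ C} with hA
  have hupper : ∀ s ∈ A, ∀ t, s ≤ t → t ∈ A := fun s hs t hst => by
    have h := C.add_mem hs (C.smul_mem (interior_subset he) (sub_nonneg.2 hst))
    rwa [show d + s • e + (t - s) • e = d + t • e by module] at h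
  have hnonempty : A.Nonempty := by
    obtain ⟨r, hr, hmem⟩ := exists_pos_add_smul_mem_interior he d
    refine ⟨r⁻¹, ?_⟩
    simpa [hA, smul_smul, hr.ne', add_comm] using
      C.smul_mem (interior_subset hmem) (inv_nonneg.2 hr.le)
  have hbdd : BddBelow A := by
    by_contra hunbdd
    refine hne (mem_of_forall_pos_add_smul_mem C.isClosed (v := d) fun ε hε => ?_)
    obtain ⟨s, hs, hlt⟩ := not_bddBelow_iff.1 hunbdd (-ε⁻¹)
    have h := C.smul_mem (hupper s hs _ hlt.le) hε.le
    rwa [smul_add, smul_smul, mul_neg, mul_inv_cancel₀ hε.ne', neg_one_smul, add_comm] at h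
  have hclosed : IsClosed A := C.isClosed.preimage (by fun_prop)
  exact ⟨sInf A, fun s => ⟨fun hs => csInf_le hbdd hs,
    hupper _ (hclosed.csInf_mem hnonempty hbdd) s⟩⟩

theorem add_smul_mem_interior_iff {d e : E} (he : e ∈ interior (C : Set E)) {s₁ : ℝ}
    (hs₁ : ∀ s : ℝ, d + s • e ∈ C ↔ s₁ ≤ s) (s : ℝ) :
    d + s • e ∈ interior (C : Set E) ↔ s₁ < s := by
  constructor
  · intro hmem
    obtain ⟨t, ht, hmem⟩ := exists_pos_add_smul_mem_interior hmem (-e)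
    rw [show d + s • e + t • -e = d + (s - t) • e by module] at hmem
    linarith [(hs₁ _).1 (interior_subset hmem)]
  · intro hlt
    rw [show d + s • e = d + s₁ • e + (s - s₁) • e by module]
    exact add_mem_interior_of_mem_of_mem_interior ((hs₁ s₁).2 le_rfl)
      (smul_mem_interior_of_pos he (sub_pos.2 hlt))

theorem add_smul_mem_frontier_iff {d e : E} (he : e ∈ interior (C : Set E)) {s₁ : ℝ}
    (hs₁ : ∀ s : ℝ, d + s • e ∈ C ↔ s₁ ≤ s) (s : ℝ) :
    d + s • e ∈ frontier (C : Set E) ↔ s = s₁ := by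
  rw [C.isClosed.frontier_eq, Set.mem_sdiff, add_smul_mem_interior_iff he hs₁, SetLike.mem_coe, hs₁,
    not_lt, ge_antisymm_iff]

variable {Q : QuadraticForm ℝ E}

-- The line `d + s • e` meets the frontiers of `C` and of `-C`, and `Q` vanishes at both points.
theorem exists_quadraticForm_add_smul_eq_mul [Nontrivial E] (hC : ∀ x ∈ C, -x ∈ C → x = 0)
    (hfr : ∀ x ∈ frontier (C : Set E), Q x = 0) {e : E} (he : e ∈ interior (C : Set E)) (d : E) :
    ∃ s₁ s₂ : ℝ, s₂ ≤ s₁ ∧ (∀ s : ℝ, d + s • e ∈ C ↔ s₁ ≤ s) ∧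
      (∀ s : ℝ, -d + s • e ∈ C ↔ -s₂ ≤ s) ∧
      ∀ s : ℝ, Q (d + s • e) = Q e * ((s - s₁) * (s - s₂)) := by
  have hne := neg_notMem_of_mem_interior hC he
  obtain ⟨s₁, hs₁⟩ := exists_forall_add_smul_mem_iff he hne d
  obtain ⟨t, ht⟩ := exists_forall_add_smul_mem_iff he hne (-d)
  obtain ⟨s₂, rfl⟩ : ∃ s₂, -s₂ = t := ⟨-t, neg_neg t⟩
  have hneg_mem : -(d + s₂ • e) ∈ C := by
    rw [show -(d + s₂ • e) = -d + (-s₂) • e by module]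
    exact (ht _).2 le_rfl
  have hle : s₂ ≤ s₁ := by
    by_contra! hlt
    exact neg_notMem_of_mem_interior hC ((add_smul_mem_interior_iff he hs₁ s₂).2 hlt) hneg_mem
  have hroot₁ : Q (d + s₁ • e) = 0 := hfr _ ((add_smul_mem_frontier_iff he hs₁ s₁).2 rfl)
  have hroot₂ : Q (d + s₂ • e) = 0 := by
    rw [← QuadraticMap.map_neg, show -(d + s₂ • e) = -d + (-s₂) • e by module]
    exact hfr _ ((add_smul_mem_frontier_iff he ht _).2 rfl)
  refine ⟨s₁, s₂, hle, hs₁, ht, fun s => ?_⟩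
  rcases hle.eq_or_lt with rfl | hlt
  · have hd : d + s₂ • e = 0 := hC _ ((hs₁ _).2 le_rfl) hneg_mem
    rw [show d + s • e = (s - s₂) • e + (d + s₂ • e) by module, hd, add_zero,
      QuadraticMap.map_smul, smul_eq_mul, mul_comm]
  · rw [quadraticForm_add_smul] at hroot₁ hroot₂ ⊢
    refine mul_left_cancel₀ (sub_pos.2 hlt).ne' ?_
    linear_combination (s - s₂) * hroot₁ - (s - s₁) * hroot₂

theorem quadraticForm_ne_zero_of_mem_interior [Nontrivial E] (hC : ∀ x ∈ C, -x ∈ C → x = 0)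
    (hQ : Q ≠ 0) (hfr : ∀ x ∈ frontier (C : Set E), Q x = 0) {e : E}
    (he : e ∈ interior (C : Set E)) : Q e ≠ 0 := by
  refine fun hQe => hQ (QuadraticMap.ext fun d => ?_)
  obtain ⟨s₁, s₂, -, -, -, hfactor⟩ := exists_quadraticForm_add_smul_eq_mul hC hfr he d
  simpa [hQe] using hfactor 0

theorem mem_interior_or_neg_mem_interior_of_mul_pos [Nontrivial E]
    (hC : ∀ x ∈ C, -x ∈ C → x = 0) (hfr : ∀ x ∈ frontier (C : Set E), Q x = 0) {d e : E}
    (he : e ∈ interior (C : Set E)) (hde : 0 < Q d * Q e) :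
    d ∈ interior (C : Set E) ∨ -d ∈ interior (C : Set E) := by
  obtain ⟨s₁, s₂, hle, hs₁, hs₂, hfactor⟩ := exists_quadraticForm_add_smul_eq_mul hC hfr he d
  have hQd : Q d = Q e * (s₁ * s₂) := by simpa using hfactor 0
  have hmul : 0 < s₁ * s₂ := by
    by_contra! hnonpos
    rw [hQd] at hde
    nlinarith [sq_nonneg (Q e)]
  rcases pos_and_pos_or_neg_and_neg_of_mul_pos hmul with hpos | hneg
  · exact .inr (by simpa using (add_smul_mem_interior_iff he hs₂ 0).2 (by linarith))
  · exact .inl (by simpa using (add_smul_mem_interior_iff he hs₁ 0).2 hneg.1)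

theorem add_smul_mem_frontier_iff_of_polar_eq_zero [Nontrivial E]
    (hC : ∀ x ∈ C, -x ∈ C → x = 0) (hQ : Q ≠ 0) (hfr : ∀ x ∈ frontier (C : Set E), Q x = 0)
    {d e : E} (he : e ∈ interior (C : Set E)) (hde : QuadraticMap.polar Q d e = 0) :
    (d ≠ 0 → 0 < -Q d / Q e) ∧
      ∀ s : ℝ, d + s • e ∈ frontier (C : Set E) ↔ s = √(-Q d / Q e) := by
  obtain ⟨s₁, s₂, hle, hs₁, hs₂, hfactor⟩ := exists_quadraticForm_add_smul_eq_mul hC hfr he d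
  have hQe := quadraticForm_ne_zero_of_mem_interior hC hQ hfr he
  have hQd : Q d = Q e * (s₁ * s₂) := by simpa using hfactor 0
  obtain rfl : s₂ = -s₁ := by
    have hone := hfactor 1
    rw [quadraticForm_add_smul, hde, hQd] at hone
    have : Q e * (s₁ + s₂) = 0 := by linear_combination hone
    linarith [(mul_eq_zero.1 this).resolve_left hQe]
  have hs₁0 : 0 ≤ s₁ := by linarith
  have hratio : -Q d / Q e = s₁ ^ 2 := by
    rw [hQd]
    field_simp
  rw [hratio, Real.sqrt_sq hs₁0]
  refine ⟨fun hd => pow_pos (hs₁0.lt_of_ne ?_) 2, add_smul_mem_frontier_iff he hs₁⟩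
  rintro rfl
  exact hd (hC d (by simpa using (hs₁ 0).2 le_rfl) (by simpa using (hs₂ 0).2 (by simp)))

end QuadraticCone

section Diagonalization

variable {E : Type*} [NormedAddCommGroup E] [InnerProductSpace ℝ E] {n : ℕ}

/-- The orthonormal basis `b` diagonalizes `Q` with eigenvalues `μ`, expressed through the polar
form so that no symmetric bilinear form has to be chosen. -/
def IsDiagonalizing (Q : QuadraticForm ℝ E) (b : OrthonormalBasis (Fin n) ℝ E) (μ : Fin n → ℝ) :
    Prop :=
  ∀ i x, QuadraticMap.polar Q (b i) x = 2 * (μ i * ⟪b i, x⟫)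

theorem exists_isDiagonalizing [FiniteDimensional ℝ E] (hn : finrank ℝ E = n)
    (Q : QuadraticForm ℝ E) :
    ∃ (b : OrthonormalBasis (Fin n) ℝ E) (μ : Fin n → ℝ), IsDiagonalizing Q b μ := by
  let S : E →ₗ[ℝ] E :=
    { toFun x := (InnerProductSpace.toDual ℝ E).symm
        (LinearMap.toContinuousLinearMap (Q.polarBilin x))
      map_add' _ _ := by simp
      map_smul' _ _ := by simp }
  have hS : ∀ x y, ⟪S x, y⟫ = QuadraticMap.polar Q x y := fun x y => by
    simp [S, InnerProductSpace.toDual_symm_apply]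
  have hsymm : S.IsSymmetric := fun x y => by
    rw [hS, real_inner_comm, hS, QuadraticMap.polar_comm]
  refine ⟨hsymm.eigenvectorBasis hn, fun i => hsymm.eigenvalues hn i / 2, fun i x => ?_⟩
  rw [← hS, hsymm.apply_eigenvectorBasis, real_inner_smul_left, RCLike.ofReal_real_eq_id, id]
  ring

variable {Q : QuadraticForm ℝ E} {b : OrthonormalBasis (Fin n) ℝ E} {μ : Fin n → ℝ}

theorem apply_eq_sum_of_isDiagonalizing (h : IsDiagonalizing Q b μ) (x : E) :
    Q x = ∑ i, μ i * ⟪b i, x⟫ ^ 2 := by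
  have hpolar : 2 * Q x = ∑ i, 2 * (μ i * ⟪b i, x⟫ ^ 2) := by
    calc 2 * Q x = Q.polarBilin x x := by
          rw [QuadraticMap.polarBilin_apply_apply, QuadraticMap.polar_self, two_nsmul,
            two_mul]
      _ = Q.polarBilin (∑ i, ⟪b i, x⟫ • b i) x := by rw [b.sum_repr' x]
      _ = ∑ i, 2 * (μ i * ⟪b i, x⟫ ^ 2) := by
          rw [map_sum, LinearMap.sum_apply]
          refine Finset.sum_congr rfl fun i _ => ?_
          rw [map_smul, LinearMap.smul_apply, QuadraticMap.polarBilin_apply_apply, h i x,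
            smul_eq_mul]
          ring
  rw [← Finset.mul_sum] at hpolar
  exact mul_left_cancel₀ two_ne_zero hpolar

theorem apply_basis_of_isDiagonalizing (h : IsDiagonalizing Q b μ) (i : Fin n) : Q (b i) = μ i := by
  have hpolar := h i (b i)
  rw [QuadraticMap.polar_self, real_inner_self_eq_norm_sq, b.norm_eq_one, two_nsmul] at hpolar
  linarith

theorem isDiagonalizing_map_neg (h : IsDiagonalizing Q b μ) :
    IsDiagonalizing Q (b.map (LinearIsometryEquiv.neg ℝ)) μ := fun i x => by
  simp [QuadraticMap.polar_neg_left, h i x]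

theorem isDiagonalizing_reindex (h : IsDiagonalizing Q b μ) (σ : Equiv.Perm (Fin n)) :
    IsDiagonalizing Q (b.reindex σ) (μ ∘ σ.symm) := fun i x => by
  simp [h (σ.symm i) x]

variable {C : ProperCone ℝ E}

theorem exists_isDiagonalizing_mem_interior [FiniteDimensional ℝ E] [Nontrivial E]
    (hn : finrank ℝ E = n) (hC : ∀ x ∈ C, -x ∈ C → x = 0) (hCi : (interior (C : Set E)).Nonempty)
    (hQ : Q ≠ 0) (hfr : ∀ x ∈ frontier (C : Set E), Q x = 0) (i₀ : Fin n) :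
    ∃ (b : OrthonormalBasis (Fin n) ℝ E) (μ : Fin n → ℝ),
      IsDiagonalizing Q b μ ∧ b i₀ ∈ interior (C : Set E) := by
  obtain ⟨e, he⟩ := hCi
  have hQe := quadraticForm_ne_zero_of_mem_interior hC hQ hfr he
  obtain ⟨b, μ, hb⟩ := exists_isDiagonalizing hn Q
  obtain ⟨i, hi⟩ : ∃ i, 0 < Q (b i) * Q e := by
    by_contra! hnonpos
    have hsum : Q e * Q e ≤ 0 := by
      nth_rw 1 [apply_eq_sum_of_isDiagonalizing hb e, Finset.sum_mul]
      refine Finset.sum_nonpos fun i _ => ?_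
      have hi := hnonpos i
      rw [apply_basis_of_isDiagonalizing hb] at hi
      nlinarith [sq_nonneg ⟪b i, e⟫]
    exact hsum.not_gt (mul_self_pos.2 hQe)
  rcases mem_interior_or_neg_mem_interior_of_mul_pos hC hfr he hi with hmem | hmem
  · exact ⟨_, _, isDiagonalizing_reindex hb (Equiv.swap i i₀), by simpa using hmem⟩
  · exact ⟨_, _, isDiagonalizing_reindex (isDiagonalizing_map_neg hb) (Equiv.swap i i₀),
      by simpa using hmem⟩

theorem neg_div_eq_sum_erase_of_isDiagonalizing (h : IsDiagonalizing Q b μ) (i₀ : Fin n) (x : E) :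
    -Q (x - ⟪b i₀, x⟫ • b i₀) / Q (b i₀) =
      ∑ i ∈ Finset.univ.erase i₀, -Q (b i) / Q (b i₀) * ⟪b i, x⟫ ^ 2 := by
  have hsum : Q (x - ⟪b i₀, x⟫ • b i₀) = ∑ i ∈ Finset.univ.erase i₀, Q (b i) * ⟪b i, x⟫ ^ 2 := by
    rw [apply_eq_sum_of_isDiagonalizing h, ← Finset.add_sum_erase _ _ (Finset.mem_univ i₀),
      inner_sub_right, real_inner_smul_right, real_inner_self_eq_norm_sq, b.norm_eq_one]
    simp only [one_pow, mul_one, sub_self, ne_eq, OfNat.ofNat_ne_zero, not_false_eq_true, zero_pow,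
      mul_zero, zero_add]
    refine Finset.sum_congr rfl fun i hi => ?_
    rw [apply_basis_of_isDiagonalizing h, inner_sub_right, real_inner_smul_right,
      b.inner_eq_zero (Finset.ne_of_mem_erase hi), mul_zero, sub_zero]
  rw [hsum, ← Finset.sum_neg_distrib, Finset.sum_div]
  exact Finset.sum_congr rfl fun i _ => by ring

theorem exists_frontier_eq_cone_sheet [FiniteDimensional ℝ E] [Nontrivial E]
    (hn : finrank ℝ E = n) (hC : ∀ x ∈ C, -x ∈ C → x = 0) (hCi : (interior (C : Set E)).Nonempty)
    (hQ : Q ≠ 0) (hfr : ∀ x ∈ frontier (C : Set E), Q x = 0) (i₀ : Fin n) :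
    ∃ (b : OrthonormalBasis (Fin n) ℝ E) (a : Fin n → ℝ), (∀ i ≠ i₀, 0 < a i) ∧
      frontier (C : Set E) =
        {x | ⟪b i₀, x⟫ = √(∑ i ∈ Finset.univ.erase i₀, a i * ⟪b i, x⟫ ^ 2)} := by
  obtain ⟨b, μ, hb, hmem⟩ := exists_isDiagonalizing_mem_interior hn hC hCi hQ hfr i₀
  refine ⟨b, fun i => -Q (b i) / Q (b i₀), fun i hi => ?_, ?_⟩
  · have hpolar : QuadraticMap.polar Q (b i) (b i₀) = 0 := by
      rw [hb, b.inner_eq_zero hi, mul_zero, mul_zero]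
    exact (add_smul_mem_frontier_iff_of_polar_eq_zero hC hQ hfr hmem hpolar).1
      (b.orthonormal.ne_zero i)
  · ext x
    have hpolar : QuadraticMap.polar Q (x - ⟪b i₀, x⟫ • b i₀) (b i₀) = 0 := by
      rw [QuadraticMap.polar_comm, hb, inner_sub_right, real_inner_smul_right,
        real_inner_self_eq_norm_sq, b.norm_eq_one]
      ring
    have hx := (add_smul_mem_frontier_iff_of_polar_eq_zero hC hQ hfr hmem hpolar).2 ⟪b i₀, x⟫
    rwa [sub_add_cancel, neg_div_eq_sum_erase_of_isDiagonalizing hb] at hx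

end Diagonalization

section Homogenization

variable {E : Type*} [NormedAddCommGroup E] [InnerProductSpace ℝ E] {C : ProperCone ℝ E}

theorem exists_homogeneous_equation {u : E} {r : ℝ} (hr : r ≠ 0)
    (hsec : HasQuadraticSection (C : Set E) u r) :
    ∃ Q : QuadraticForm ℝ E, Q ≠ 0 ∧ ∀ x ∈ frontier (C : Set E), ⟪x, u⟫ = r → Q x = 0 := by
  obtain ⟨Q, L, c, ⟨y, hyu, hy⟩, hfr⟩ := hsec.exists_quadratic_equation
  let τ : Dual ℝ E := r⁻¹ • innerₛₗ ℝ u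
  have hτ : ∀ x, τ x = r⁻¹ * ⟪x, u⟫ := fun x => by simp [τ, real_inner_comm]
  have hval : ∀ x, (Q + QuadraticMap.linMulLin L τ + c • QuadraticMap.linMulLin τ τ) x =
      Q x + L x * τ x + c * (τ x * τ x) := fun x => rfl
  refine ⟨Q + QuadraticMap.linMulLin L τ + c • QuadraticMap.linMulLin τ τ, fun h0 => hy ?_,
    fun x hx hxu => ?_⟩
  · simpa [h0, hτ, hyu] using (hval y).symm
  · rw [hval, hτ, hxu, inv_mul_cancel₀ hr, mul_one, mul_one, mul_one]
    exact hfr x hx hxu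

variable [FiniteDimensional ℝ E]

theorem span_innerDual_eq_top (hC : ∀ x ∈ C, -x ∈ C → x = 0) :
    Submodule.span ℝ (ProperCone.innerDual (C : Set E) : Set E) = ⊤ := by
  rw [← Submodule.orthogonal_eq_bot_iff, Submodule.eq_bot_iff]
  intro v hv
  have hperp : ∀ ν ∈ ProperCone.innerDual (C : Set E), ⟪ν, v⟫ = 0 := fun ν hν =>
    (Submodule.mem_orthogonal _ v).1 hv ν (Submodule.subset_span hν)
  refine hC v ?_ ?_ <;> rw [← ProperCone.innerDual_innerDual C, ProperCone.mem_innerDual]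
  · exact fun ν hν => (hperp ν hν).ge
  · exact fun ν hν => by rw [inner_neg_right, hperp ν hν, neg_zero]

theorem exists_forall_inner_pos (hC : ∀ x ∈ C, -x ∈ C → x = 0) :
    ∃ u : E, ∀ x ∈ C, x ≠ 0 → 0 < ⟪x, u⟫ := by
  have hspan := (span_innerDual_eq_top hC).ge
  obtain ⟨ι, b, hb⟩ : ∃ (ι : Type _) (b : Basis ι ℝ E),
      ∀ i, b i ∈ ProperCone.innerDual (C : Set E) :=
    ⟨_, Basis.ofSpan hspan, fun i => Basis.ofSpan_subset hspan ⟨i, rfl⟩⟩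
  have := Module.Finite.finite_basis b
  cases nonempty_fintype ι
  have hnonneg : ∀ x ∈ C, ∀ i ∈ Finset.univ, 0 ≤ ⟪x, b i⟫ := fun x hx i _ =>
    ProperCone.mem_innerDual.1 (hb i) hx
  refine ⟨∑ i, b i, fun x hx hx0 => ?_⟩
  rw [inner_sum]
  refine (Finset.sum_nonneg (hnonneg x hx)).lt_of_ne fun hsum => hx0 ?_
  refine InnerProductSpace.ext_inner_left_basis b fun i => ?_
  rw [inner_zero_right, real_inner_comm]
  exact (Finset.sum_eq_zero_iff_of_nonneg (hnonneg x hx)).1 hsum.symm i (Finset.mem_univ i)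

theorem exists_unit_forall_inner_pos [Nontrivial E] (hC : ∀ x ∈ C, -x ∈ C → x = 0)
    (hCi : (interior (C : Set E)).Nonempty) :
    ∃ u : sphere (0 : E) 1, ∀ x ∈ C, x ≠ 0 → 0 < ⟪x, (u : E)⟫ := by
  obtain ⟨u, hu⟩ := exists_forall_inner_pos hC
  obtain ⟨z, hz⟩ := hCi
  have hu0 : u ≠ 0 := by
    rintro rfl
    simpa using hu z (interior_subset hz) (ne_zero_of_mem_interior hC hz)
  refine ⟨⟨‖u‖⁻¹ • u, mem_sphere_zero_iff_norm.2 (norm_smul_inv_norm hu0)⟩, fun x hx hx0 => ?_⟩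
  rw [real_inner_smul_right]
  exact mul_pos (inv_pos.2 (norm_pos_iff.2 hu0)) (hu x hx hx0)

theorem exists_quadraticForm_eq_zero_on_frontier [Nontrivial E] {δ : sphere (0 : E) 1 → ℝ}
    (h : IsQuadricallySectioned (C : Set E) δ) (hC : ∀ x ∈ C, -x ∈ C → x = 0) :
    ∃ Q : QuadraticForm ℝ E, Q ≠ 0 ∧ ∀ x ∈ frontier (C : Set E), Q x = 0 := by
  obtain ⟨u, hu⟩ := exists_unit_forall_inner_pos hC h.nonempty_interior
  obtain ⟨z, hz, hzu⟩ := (h.section_at u).exists_mem_interior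
  have hδ : 0 < δ u := hzu ▸ hu z (interior_subset hz) (ne_zero_of_mem_interior hC hz)
  obtain ⟨Q, hQ, hfr⟩ := exists_homogeneous_equation hδ.ne' (h.section_at u)
  refine ⟨Q, hQ, fun x hx => ?_⟩
  rcases eq_or_ne x 0 with rfl | hx0
  · exact QuadraticMap.map_zero Q
  have hxu := hu x (C.isClosed.frontier_subset hx) hx0
  have ht : 0 < δ u / ⟪x, (u : E)⟫ := div_pos hδ hxu
  have hscaled := hfr _ (smul_mem_frontier_of_pos hx ht)
    (by rw [real_inner_smul_left, div_mul_cancel₀ _ hxu.ne'])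
  rw [QuadraticMap.map_smul, smul_eq_mul] at hscaled
  exact (mul_eq_zero.1 hscaled).resolve_left (mul_pos ht ht).ne'

end Homogenization

section ConvexQuadric

theorem frontier_connectedComponentIn_subset_compl {X : Type*} [TopologicalSpace X]
    [LocallyConnectedSpace X] {F : Set X} (hF : IsOpen F) (x : X) :
    frontier (connectedComponentIn F x) ⊆ Fᶜ := by
  rw [hF.connectedComponentIn.frontier_eq]
  rintro y ⟨hy, hyx⟩ hyF
  obtain ⟨z, hzy, hzx⟩ := mem_closure_iff.1 hy _ hF.connectedComponentIn
    (mem_connectedComponentIn hyF)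
  rw [connectedComponentIn_eq hzx, ← connectedComponentIn_eq hzy] at hyx
  exact hyx (mem_connectedComponentIn hyF)

theorem toQuadraticForm'_ne_zero {ι : Type*} [Fintype ι] [DecidableEq ι] {a : Matrix ι ι ℝ}
    (ha : a.IsSymm) (ha0 : a ≠ 0) : a.toQuadraticForm' ≠ 0 := by
  intro hzero
  have hsymm : ∀ x y, Matrix.toLinearMap₂' ℝ a x y = Matrix.toLinearMap₂' ℝ a y x := fun x y => by
    rw [Matrix.toLinearMap₂'_apply', Matrix.toLinearMap₂'_apply', dotProduct_comm,
      ← Matrix.vecMul_transpose, ha.eq, ← Matrix.dotProduct_mulVec]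
  have hassoc : QuadraticMap.associated a.toQuadraticForm' = Matrix.toLinearMap₂' ℝ a :=
    QuadraticMap.associated_left_inverse ℝ hsymm
  rw [hzero, map_zero] at hassoc
  exact ha0 ((Matrix.toLinearMap₂' ℝ).map_eq_zero_iff.1 hassoc.symm)

theorem exists_quadratic_equation_of_isQuadricSurface {m : ℕ} {S : Set (En m)}
    (hS : IsQuadricSurface S) :
    ∃ (Q : QuadraticForm ℝ (En m)) (L : Dual ℝ (En m)) (c : ℝ),
      (∃ y, Q y ≠ 0) ∧ ∀ x ∈ S, Q x + L x + c = 0 := by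
  obtain ⟨a, b, c, ha, ha0, rfl⟩ := hS
  refine ⟨a.toQuadraticForm'.comp (WithLp.linearEquiv 2 ℝ (Fin m → ℝ)).toLinearMap,
    (2 : ℝ) • innerₛₗ ℝ (WithLp.toLp 2 b), c, ?_, fun x hx => ?_⟩
  · obtain ⟨y, hy⟩ := DFunLike.ne_iff.1 (toQuadraticForm'_ne_zero ha ha0)
    exact ⟨WithLp.toLp 2 y, hy⟩
  · rw [← hx.out]
    simp [Matrix.toQuadraticForm', Matrix.toLinearMap₂'_apply, PiLp.inner_apply, mul_comm,
      mul_assoc, mul_left_comm]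

theorem isClosed_of_isQuadricSurface {m : ℕ} {S : Set (En m)} (hS : IsQuadricSurface S) :
    IsClosed S := by
  obtain ⟨a, b, c, -, -, rfl⟩ := hS
  exact isClosed_eq (by fun_prop) (by fun_prop)

theorem exists_isOpen_frontier_eq_of_isConvexQuadric {m : ℕ} {S : Set (En m)}
    (hS : IsConvexQuadric S) :
    ∃ U : Set (En m), IsOpen U ∧ Convex ℝ U ∧ U.Nonempty ∧ U ≠ univ ∧ frontier U = S := by
  obtain ⟨T, _, ⟨hT, q, hq⟩, ⟨x, hx, rfl⟩, hconv, rfl⟩ := hS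
  refine ⟨_, (isClosed_of_isQuadricSurface hT).isOpen_compl.connectedComponentIn, hconv,
    ⟨x, mem_connectedComponentIn hx⟩, fun huniv => ?_, rfl⟩
  exact connectedComponentIn_subset Tᶜ x (huniv ▸ mem_univ q) hq

theorem exists_quadratic_equation_of_isConvexQuadric {m : ℕ} {S : Set (En m)}
    (hS : IsConvexQuadric S) :
    ∃ (Q : QuadraticForm ℝ (En m)) (L : Dual ℝ (En m)) (c : ℝ),
      (∃ y, Q y ≠ 0) ∧ ∀ x ∈ S, Q x + L x + c = 0 := by
  obtain ⟨T, _, ⟨hT, -⟩, ⟨x, -, rfl⟩, -, rfl⟩ := hS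
  obtain ⟨Q, L, c, hQ, hzero⟩ := exists_quadratic_equation_of_isQuadricSurface hT
  refine ⟨Q, L, c, hQ, fun y hy => hzero y ?_⟩
  simpa using frontier_connectedComponentIn_subset_compl
    (isClosed_of_isQuadricSurface hT).isOpen_compl x hy

end ConvexQuadric

section SectionMeetsInterior

theorem exists_frontier_eq_hyperplane_of_convex_frontier {E : Type*} [NormedAddCommGroup E]
    [NormedSpace ℝ E] {U : Set E} (hUo : IsOpen U) (hU : Convex ℝ U) (hUne : U.Nonempty)
    (hfr : Convex ℝ (frontier U)) :
    ∃ (f : StrongDual ℝ E) (c : ℝ), frontier U = {x | f x = c} := by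
  have hdisj : Disjoint U (frontier U) := by
    rw [hUo.frontier_eq]
    exact disjoint_sdiff_right
  obtain ⟨f, c, hlt, hge⟩ := geometric_hahn_banach_open hU hUo hfr hdisj
  have hfrontier : ∀ x ∈ frontier U, f x = c := fun x hx =>
    (closure_minimal (t := {k | f k ≤ c}) (fun k hk => (hlt k hk).le)
      (isClosed_le (by fun_prop) (by fun_prop)) hx.1).antisymm (hge x hx)
  refine ⟨f, c, Subset.antisymm hfrontier fun y (hy : f y = c) => ?_⟩
  obtain ⟨x, hx⟩ := hUne
  obtain ⟨s, -, hs⟩ := exists_add_smul_mem_frontier (x := x) (v := y - x) (a := 0) (b := 1)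
    (by simpa using hx) (by simpa using fun hyU => (hlt y hyU).ne hy)
  have hfs : (1 - s) * (f x - c) = 0 := by
    have h := hfrontier _ hs
    rw [map_add, map_smul, map_sub, hy, smul_eq_mul] at h
    linear_combination h
  obtain rfl : s = 1 := by linarith [(mul_eq_zero.1 hfs).resolve_right (sub_neg.2 (hlt x hx)).ne]
  simpa using hs

theorem exists_line_subset_frontier_of_convex_frontier {E : Type*} [NormedAddCommGroup E]
    [NormedSpace ℝ E] [FiniteDimensional ℝ E] (hE : 2 ≤ finrank ℝ E) {U : Set E} (hUo : IsOpen U)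
    (hU : Convex ℝ U) (hUne : U.Nonempty) (hUuniv : U ≠ univ) (hfr : Convex ℝ (frontier U)) :
    ∃ p v : E, v ≠ 0 ∧ ∀ t : ℝ, p + t • v ∈ frontier U := by
  obtain ⟨f, c, hfc⟩ := exists_frontier_eq_hyperplane_of_convex_frontier hUo hU hUne hfr
  obtain ⟨p, hp⟩ := nonempty_frontier_iff.2 ⟨hUne, hUuniv⟩
  obtain ⟨v, hv, hv0⟩ := Submodule.exists_mem_ne_zero_of_ne_bot
    (LinearMap.ker_ne_bot_of_finrank_lt (f := f.toLinearMap) (by rw [finrank_self]; omega))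
  rw [hfc] at hp ⊢
  refine ⟨p, v, hv0, fun t => ?_⟩
  have hfv : f v = 0 := hv
  simpa [hfv] using hp

theorem exists_apply_mem_interior {F E : Type*} [NormedAddCommGroup F] [NormedSpace ℝ F]
    [FiniteDimensional ℝ F] [NormedAddCommGroup E] [NormedSpace ℝ E] (hF : 2 ≤ finrank ℝ F)
    (φ : F →ᵃⁱ[ℝ] E) {K : Set E} (hK : Convex ℝ K) (hKc : IsClosed K)
    (hline : ∀ p v : E, (∀ t : ℝ, p + t • v ∈ K) → v = 0) {U : Set F} (hUo : IsOpen U)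
    (hU : Convex ℝ U) (hUne : U.Nonempty) (hUuniv : U ≠ univ)
    (hfr : frontier U = φ ⁻¹' frontier K) : ∃ y, φ y ∈ interior K := by
  by_contra! hout
  have hpre : frontier U = φ ⁻¹' K := by
    rw [hfr, hKc.frontier_eq]
    exact Subset.antisymm (fun y hy => hy.1) fun y hy => ⟨hy, hout y⟩
  obtain ⟨p, v, hv, hmem⟩ := exists_line_subset_frontier_of_convex_frontier hF hUo hU hUne hUuniv
    (hpre ▸ hK.affine_preimage φ.toAffineMap)
  refine hv (φ.linearIsometry.injective ?_)
  rw [map_zero]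
  refine hline (φ p) _ fun t => ?_
  have h : φ (p + t • v) ∈ K := by simpa [hpre] using hmem t
  rwa [add_comm, ← vadd_eq_add, φ.map_vadd, map_smul, vadd_eq_add, add_comm] at h

theorem exists_quadraticForm_extend {F E : Type*} [NormedAddCommGroup F] [NormedSpace ℝ F]
    [NormedAddCommGroup E] [NormedSpace ℝ E] (φ : F →ᵃⁱ[ℝ] E) (Q : QuadraticForm ℝ F)
    (L : Dual ℝ F) (c : ℝ) :
    ∃ (Q' : QuadraticForm ℝ E) (L' : Dual ℝ E) (c' : ℝ),
      (∀ y, Q' (φ.linearIsometry y) = Q y) ∧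
      ∀ y, Q' (φ y) + L' (φ y) + c' = Q y + L y + c := by
  obtain ⟨g, hg⟩ := φ.linearIsometry.toLinearMap.exists_leftInverse_of_injective
    (LinearMap.ker_eq_bot.2 φ.linearIsometry.injective)
  have hg_apply : ∀ y, g (φ.linearIsometry y) = y := LinearMap.congr_fun hg
  obtain ⟨L', c', htranslate⟩ := exists_quadraticForm_translate (Q.comp g) (L ∘ₗ g) c (-φ 0)
  refine ⟨Q.comp g, L', c', fun y => by rw [QuadraticMap.comp_apply, hg_apply], fun y => ?_⟩
  have hφ : -φ 0 + φ y = φ.linearIsometry y := by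
    simpa [neg_add_eq_sub] using (φ.map_vsub y 0).symm
  rw [← htranslate, hφ, QuadraticMap.comp_apply, LinearMap.comp_apply, hg_apply]

theorem hasQuadraticSection_of_isConvexQuadricIn {n : ℕ} (hn : 3 ≤ n) {K : Set (En n)}
    (hK : Convex ℝ K) (hKc : IsClosed K)
    (hline : ∀ p v : En n, (∀ t : ℝ, p + t • v ∈ K) → v = 0) {u : En n} {r : ℝ}
    (hsec : IsConvexQuadricIn {x | ⟪x, u⟫ = r} (frontier K ∩ {x | ⟪x, u⟫ = r})) :
    HasQuadraticSection K u r := by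
  obtain ⟨-, φ, hφ, hquadric⟩ := hsec
  have hinner : ∀ y, ⟪φ y, u⟫ = r := fun y => hφ.subset (mem_range_self y)
  obtain ⟨U, hUo, hU, hUne, hUuniv, hfr⟩ := exists_isOpen_frontier_eq_of_isConvexQuadric hquadric
  obtain ⟨Q, L, c, ⟨y, hy⟩, hzero⟩ := exists_quadratic_equation_of_isConvexQuadric hquadric
  obtain ⟨Q', L', c', hQ', heq⟩ := exists_quadraticForm_extend φ Q L c
  refine ⟨?_, Q', L', c', ⟨φ.linearIsometry y, ?_, by rwa [hQ']⟩, fun x hx hxu => ?_⟩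
  · have hfr' : frontier U = φ ⁻¹' frontier K := by
      rw [hfr, ← hφ, preimage_inter, preimage_range, inter_univ]
    obtain ⟨z, hz⟩ := exists_apply_mem_interior (by rw [finrank_euclideanSpace_fin]; omega) φ hK hKc
      hline hUo hU hUne hUuniv hfr'
    exact ⟨φ z, hz, hinner z⟩
  · rw [show φ.linearIsometry y = φ y - φ 0 by simpa using φ.map_vsub y 0,
      inner_sub_left, hinner, hinner, sub_self]
  · obtain ⟨y, rfl⟩ := hφ.superset hxu
    rw [heq]
    exact hzero y ⟨hx, hxu⟩

end SectionMeetsInterior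

section SingularPoints

theorem zero_mem_neg_vadd_iff {M : Type*} [AddGroup M] {K : Set M} {p : M} :
    (0 : M) ∈ -p +ᵥ K ↔ p ∈ K := by
  rw [Set.mem_neg_vadd_set_iff, vadd_eq_add, add_zero]

variable {E : Type*} [NormedAddCommGroup E] [InnerProductSpace ℝ E] {K : Set E} {p ν : E}

theorem setOf_inner_eq_of_smul_eq {ν₀ ν₁ : E} {c : ℝ} (hc : c ≠ 0) (h : c • ν₀ = ν₁) :
    {y : E | ⟪y, ν₁⟫ = ⟪p, ν₁⟫} = {y : E | ⟪y, ν₀⟫ = ⟪p, ν₀⟫} := by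
  ext y
  simp only [← h, real_inner_smul_right, Set.mem_ofPred_eq, mul_right_inj' hc]

variable [CompleteSpace E]

/-- A frontier point of `K` with two linearly independent inward normals. The inward normals of `K`
at `p` are encoded as the dual cone of the translate `-p +ᵥ K`. -/
def IsSingularPoint (K : Set E) (p : E) : Prop :=
  p ∈ frontier K ∧ ∃ ν₀ ∈ ProperCone.innerDual (-p +ᵥ K), ∃ ν₁ ∈ ProperCone.innerDual (-p +ᵥ K),
    LinearIndependent ℝ ![ν₀, ν₁]

theorem mem_innerDual_neg_vadd_iff :
    ν ∈ ProperCone.innerDual (-p +ᵥ K) ↔ ∀ k ∈ K, ⟪p, ν⟫ ≤ ⟪k, ν⟫ := by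
  rw [ProperCone.mem_innerDual]
  refine ⟨fun h k hk => ?_, fun h x hx => ?_⟩
  · have hnonneg := h (Set.vadd_mem_vadd_set (a := -p) hk)
    rw [vadd_eq_add, inner_add_left, inner_neg_left] at hnonneg
    linarith
  · have hle := h _ (Set.mem_neg_vadd_set_iff.1 hx)
    rw [vadd_eq_add, inner_add_left] at hle
    linarith

theorem inner_lt_inner_of_mem_interior (hν : ν ∈ ProperCone.innerDual (-p +ᵥ K)) (hν0 : ν ≠ 0)
    {z : E} (hz : z ∈ interior K) : ⟪p, ν⟫ < ⟪z, ν⟫ := by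
  have hpos := inner_pos_of_mem_interior hν hν0 (z := -p +ᵥ z)
    (by rw [interior_vadd]; exact Set.vadd_mem_vadd_set hz)
  rw [vadd_eq_add, inner_add_left, inner_neg_left] at hpos
  linarith

theorem mem_innerDual_or_neg_mem_innerDual (hK : Convex ℝ K) (hKi : (interior K).Nonempty)
    (hν : ∀ z ∈ interior K, ⟪z, ν⟫ ≠ 0) :
    ν ∈ ProperCone.innerDual K ∨ -ν ∈ ProperCone.innerDual K := by
  have hdense : K ⊆ closure (interior K) := by
    rw [hK.closure_interior_eq_closure_of_nonempty_interior hKi]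
    exact subset_closure
  have hmem : ∀ μ : E, (∀ z ∈ interior K, 0 ≤ ⟪z, μ⟫) → μ ∈ ProperCone.innerDual K :=
    fun μ hμ => ProperCone.mem_innerDual.2 fun k hk =>
      closure_minimal (t := {k | 0 ≤ ⟪k, μ⟫}) hμ
        (isClosed_le continuous_const (by fun_prop)) (hdense hk)
  by_contra! hnot
  obtain ⟨x, hx, hxν⟩ : ∃ x ∈ interior K, ⟪x, ν⟫ < 0 := by
    by_contra! hall
    exact hnot.1 (hmem ν hall)
  obtain ⟨y, hy, hyν⟩ : ∃ y ∈ interior K, 0 < ⟪y, ν⟫ := by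
    by_contra! hall
    exact hnot.2 (hmem (-ν) (by simpa using hall))
  obtain ⟨z, hz, hzν⟩ := hK.interior.isPreconnected.intermediate_value hx hy
    (f := fun z => ⟪z, ν⟫) (by fun_prop) ⟨hxν.le, hyν.le⟩
  exact hν z hz hzν

end SingularPoints

section NotRegular

variable {n : ℕ} {K : Set (En n)} {p ν : En n} {G : Set (En n)}

theorem isSupportHyperplaneAt_of_mem_innerDual (hp : p ∈ K)
    (hν : ν ∈ ProperCone.innerDual (-p +ᵥ K)) (hν0 : ν ≠ 0) :
    IsSupportHyperplaneAt K p {y | ⟪y, ν⟫ = ⟪p, ν⟫} :=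
  ⟨⟨ν, _, hν0, rfl⟩, rfl, ⟨p, rfl, hp⟩, eq_empty_of_forall_notMem fun _ hz =>
    (inner_lt_inner_of_mem_interior hν hν0 hz.2).ne' hz.1⟩

theorem exists_normal_of_isSupportHyperplaneAt (hK : Convex ℝ K) (hKi : (interior K).Nonempty)
    (hG : IsSupportHyperplaneAt K p G) :
    ∃ ν ∈ ProperCone.innerDual (-p +ᵥ K), ν ≠ 0 ∧ G = {y | ⟪y, ν⟫ = ⟪p, ν⟫} := by
  obtain ⟨⟨v, c, hv, rfl⟩, hpG, -, hempty⟩ := hG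
  obtain rfl : ⟪p, v⟫ = c := hpG
  have hne : ∀ z ∈ interior (-p +ᵥ K), ⟪z, v⟫ ≠ 0 := fun z hz hzv => by
    rw [interior_vadd, Set.mem_neg_vadd_set_iff, vadd_eq_add] at hz
    exact eq_empty_iff_forall_notMem.1 hempty _ ⟨by simp [inner_add_left, hzv], hz⟩
  rcases mem_innerDual_or_neg_mem_innerDual (hK.vadd (-p))
    (by simpa only [interior_vadd, Set.vadd_set_nonempty] using hKi) hne with hmem | hmem
  · exact ⟨v, hmem, hv, rfl⟩
  · exact ⟨-v, hmem, neg_ne_zero.2 hv,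
      (setOf_inner_eq_of_smul_eq (c := -1) (by norm_num) (by simp)).symm⟩

theorem exists_isSingularPoint_of_not_isRegularSet (hK : Convex ℝ K) (hKc : IsClosed K)
    (hKi : (interior K).Nonempty) (hreg : ¬ IsRegularSet K) : ∃ p, IsSingularPoint K p := by
  unfold IsRegularSet at hreg
  push Not at hreg
  obtain ⟨p, hp, hunique⟩ := hreg
  obtain ⟨ν₀, hν₀0, hsupport⟩ := exists_supporting_normal hK hKi hp.2
  have hν₀ := mem_innerDual_neg_vadd_iff.2 hsupport
  obtain ⟨G, hG, hGne⟩ : ∃ G, IsSupportHyperplaneAt K p G ∧ G ≠ {y | ⟪y, ν₀⟫ = ⟪p, ν₀⟫} := by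
    by_contra! hall
    exact hunique
      ⟨_, isSupportHyperplaneAt_of_mem_innerDual (hKc.frontier_subset hp) hν₀ hν₀0, hall⟩
  obtain ⟨ν₁, hν₁, hν₁0, rfl⟩ := exists_normal_of_isSupportHyperplaneAt hK hKi hG
  refine ⟨p, hp, ν₀, hν₀, ν₁, hν₁, (LinearIndependent.pair_iff' hν₀0).2 fun c hc => hGne ?_⟩
  have hc0 : c ≠ 0 := fun h => hν₁0 (by rw [← hc, h, zero_smul])
  exact setOf_inner_eq_of_smul_eq hc0 hc

end NotRegular

section NotStrictlyConvex

variable {E : Type*} [NormedAddCommGroup E] [InnerProductSpace ℝ E] {K : Set E}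

theorem exists_last_add_smul_mem (hK : Convex ℝ K) (hKc : IsClosed K) {m v : E} (hm : m ∈ K)
    {t : ℝ} (ht : 0 < t) (hout : m + t • v ∉ K) :
    ∃ T : ℝ, 0 ≤ T ∧ m + T • v ∈ K ∧ ∀ s, T < s → m + s • v ∉ K := by
  set S : Set ℝ := {s | m + s • v ∈ K}
  have hzero : (0 : ℝ) ∈ S := by simpa [S] using hm
  have hbdd : BddAbove S := ⟨t, fun s hs => by
    by_contra! hlt
    exact hout ((ordConnected_setOf_add_smul_mem hK m v).out hzero hs ⟨ht.le, hlt.le⟩)⟩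
  have hclosed : IsClosed S := hKc.preimage (by fun_prop)
  exact ⟨sSup S, le_csSup hbdd hzero, hclosed.csSup_mem ⟨0, hzero⟩ hbdd,
    fun s hs hmem => hs.not_ge (le_csSup hbdd hmem)⟩

theorem exists_end_of_segment (hK : Convex ℝ K) (hKc : IsClosed K)
    (hline : ∀ p v : E, (∀ t : ℝ, p + t • v ∈ K) → v = 0) {m v : E} (hv : v ≠ 0)
    (hadd : m + v ∈ K) (hsub : m - v ∈ K) :
    ∃ (T : ℝ) (d : E), (d = v ∨ d = -v) ∧ m + T • d ∈ K ∧ m + T • d - d ∈ K ∧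
      ∀ s : ℝ, 0 < s → m + T • d + s • d ∉ K := by
  have hm : m ∈ K := by
    simpa using (ordConnected_setOf_add_smul_mem hK m v).out (x := -1) (y := 1)
      (by simpa [← sub_eq_add_neg] using hsub) (by simpa using hadd)
      (show (0 : ℝ) ∈ Icc _ _ by norm_num)
  obtain ⟨d, t, hd, hdm, ht, hout⟩ : ∃ (d : E) (t : ℝ), (d = v ∨ d = -v) ∧ m - d ∈ K ∧ 0 < t ∧
      m + t • d ∉ K := by
    obtain ⟨t, ht⟩ : ∃ t : ℝ, m + t • v ∉ K := by
      by_contra! hall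
      exact hv (hline m v hall)
    rcases lt_trichotomy t 0 with hneg | rfl | hpos
    · exact ⟨-v, -t, .inr rfl, by simpa using hadd, by linarith, by simpa using ht⟩
    · exact absurd hm (by simpa using ht)
    · exact ⟨v, t, .inl rfl, hsub, hpos, ht⟩
  obtain ⟨T, hT, hmem, hlast⟩ := exists_last_add_smul_mem hK hKc hm ht hout
  refine ⟨T, d, hd, hmem, ?_, fun s hs => ?_⟩
  · rw [show m + T • d - d = m + (T - 1) • d by module]
    exact (ordConnected_setOf_add_smul_mem hK m d).out (x := -1)
      (by simpa [← sub_eq_add_neg] using hdm) hmem ⟨by linarith, by linarith⟩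
  · rw [add_assoc, ← add_smul]
    exact hlast _ (by linarith)

theorem exists_end_of_segment_with_normal [CompleteSpace E] (hK : Convex ℝ K) (hKc : IsClosed K)
    (hKi : (interior K).Nonempty) (hline : ∀ p v : E, (∀ t : ℝ, p + t • v ∈ K) → v = 0)
    {m v : E} (hv : v ≠ 0) (hadd : m + v ∈ K) (hsub : m - v ∈ K) (hm : m ∉ interior K) :
    ∃ p ∈ K, ∃ d : E, p - d ∈ K ∧ (∀ s : ℝ, 0 < s → p + s • d ∉ K) ∧
      ∃ ν ∈ ProperCone.innerDual (-p +ᵥ K), ν ≠ 0 ∧ ⟪d, ν⟫ = 0 := by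
  obtain ⟨ν, hν0, hsupport⟩ := exists_supporting_normal hK hKi hm
  have hvν : ⟪v, ν⟫ = 0 := by
    have hle := hsupport _ hadd
    have hge := hsupport _ hsub
    rw [inner_add_left] at hle
    rw [inner_sub_left] at hge
    linarith
  obtain ⟨T, d, hd, hmem, hbehind, hbeyond⟩ :=
    exists_end_of_segment hK hKc hline hv hadd hsub
  have hdν : ⟪d, ν⟫ = 0 := by rcases hd with rfl | rfl <;> simp [hvν]
  refine ⟨_, hmem, d, hbehind, hbeyond, ν, mem_innerDual_neg_vadd_iff.2 fun k hk => ?_, hν0, hdν⟩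
  rw [inner_add_left, real_inner_smul_left, hdν, mul_zero, add_zero]
  exact hsupport k hk

theorem exists_linearIndependent_normal_of_segment [FiniteDimensional ℝ E] (hE : 3 ≤ finrank ℝ E)
    {δ : sphere (0 : E) 1 → ℝ} (h : IsQuadricallySectioned K δ)
    (hline : ∀ v : E, (∀ t : ℝ, t • v ∈ K) → v = 0) (h0 : (0 : E) ∈ K) {d ν : E} (hd : -d ∈ K)
    (hbeyond : ∀ s : ℝ, 0 < s → s • d ∉ K) (hν : ν ∈ ProperCone.innerDual K) (hν0 : ν ≠ 0)
    (hdν : ⟪d, ν⟫ = 0) : ∃ ν₁ ∈ ProperCone.innerDual K, LinearIndependent ℝ ![ν, ν₁] := by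
  have hsegment : ∀ s ∈ Icc (0 : ℝ) 1, -(s • d) ∈ frontier K := fun s hs => by
    rw [h.isClosed.frontier_eq, ← smul_neg]
    exact ⟨h.convex.smul_mem_of_zero_mem h0 hd hs, notMem_interior_of_inner_eq_zero hν hν0
      (by rw [real_inner_smul_left, inner_neg_left, hdν, neg_zero, mul_zero])⟩
  obtain ⟨w, hdw, hδw, -⟩ := exists_central_section_direction hE h hν hν0 hdν
  have hsecw : HasQuadraticSection K w 0 := hδw ▸ h.section_at w
  have hcone := isConic_section_of_segment h.convex h.isClosed hsecw
    (by simpa using hsegment 0 (by norm_num)) hdw hsegment hbeyond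
  obtain ⟨z, hz, hzw⟩ := exists_mem_orthogonal_mem_interior hsecw
  obtain ⟨e, he, hνe, hwe⟩ := exists_unit_inner_eq_zero_inner_eq_zero hE ν w
  by_contra! hdep
  have htangent : ∀ t : ℝ, t • e ∈ tangentCone K := fun t =>
    ProperCone.mem_innerDual.2 fun μ hμ => by
      have hμν := hdep μ hμ
      rw [LinearIndependent.pair_iff' hν0] at hμν
      push Not at hμν
      obtain ⟨c, rfl⟩ := hμν
      rw [real_inner_smul_left, real_inner_smul_right, hνe, mul_zero, mul_zero]
  have he0 : e = 0 := hline e fun t => mem_of_mem_tangentCone_of_isConic_section h.convex h.isClosed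
    hcone hz hzw (Submodule.smul_mem _ t
      (Submodule.mem_orthogonal_singleton_iff_inner_right.2 hwe)) (htangent t)
  simp [he0] at he

theorem exists_isSingularPoint_of_segment [FiniteDimensional ℝ E] (hE : 3 ≤ finrank ℝ E)
    {δ : sphere (0 : E) 1 → ℝ} (h : IsQuadricallySectioned K δ)
    (hline : ∀ p v : E, (∀ t : ℝ, p + t • v ∈ K) → v = 0) {m v : E} (hv : v ≠ 0)
    (hadd : m + v ∈ K) (hsub : m - v ∈ K) (hm : m ∉ interior K) : ∃ p, IsSingularPoint K p := by
  obtain ⟨p, hp, d, hbehind, hbeyond, ν, hν, hν0, hdν⟩ :=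
    exists_end_of_segment_with_normal h.convex h.isClosed h.nonempty_interior hline hv hadd hsub hm
  obtain ⟨ν₁, hν₁, hind⟩ := exists_linearIndependent_normal_of_segment hE
    (isQuadricallySectioned_neg_vadd h p) (d := d) (ν := ν)
    (fun v hv => hline p v fun t => Set.mem_neg_vadd_set_iff.1 (hv t))
    (zero_mem_neg_vadd_iff.2 hp)
    (by rwa [Set.mem_neg_vadd_set_iff, vadd_eq_add, ← sub_eq_add_neg])
    (fun s hs hmem => hbeyond s hs (Set.mem_neg_vadd_set_iff.1 hmem)) hν hν0 hdν
  refine ⟨p, ?_, ν, hν, ν₁, hν₁, hind⟩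
  rw [h.isClosed.frontier_eq]
  exact ⟨hp, fun hint => (inner_lt_inner_of_mem_interior hν hν0 hint).false⟩

theorem exists_isSingularPoint_of_not_isStrictlyConvexSet {n : ℕ} (hn : 3 ≤ n) {K : Set (En n)}
    {δ : sphere (0 : En n) 1 → ℝ} (h : IsQuadricallySectioned K δ)
    (hline : ∀ p v : En n, (∀ t : ℝ, p + t • v ∈ K) → v = 0) (hstrict : ¬ IsStrictlyConvexSet K) :
    ∃ p, IsSingularPoint K p := by
  unfold IsStrictlyConvexSet at hstrict
  push Not at hstrict
  obtain ⟨x, hx, y, hy, hxy, hsegment⟩ := hstrict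
  refine exists_isSingularPoint_of_segment (by simpa using hn) h hline
    (m := midpoint ℝ x y) (v := (2⁻¹ : ℝ) • (y - x))
    (smul_ne_zero (by norm_num) (sub_ne_zero.2 hxy.symm)) ?_ ?_
    (hsegment (midpoint_mem_segment x y)).2
  · convert h.isClosed.frontier_subset hy using 1
    rw [midpoint_eq_smul_add, invOf_eq_inv]
    module
  · convert h.isClosed.frontier_subset hx using 1
    rw [midpoint_eq_smul_add, invOf_eq_inv]
    module

end NotStrictlyConvex

section ConeSheet

variable {n : ℕ}

theorem exists_frontier_eq_cone_sheet_of_isSingularPoint (hn : 3 ≤ n) {K : Set (En n)}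
    {δ : sphere (0 : En n) 1 → ℝ} (h : IsQuadricallySectioned K δ)
    (hline : ∀ p v : En n, (∀ t : ℝ, p + t • v ∈ K) → v = 0) {p : En n}
    (hp : IsSingularPoint K p) (i₀ : Fin n) :
    ∃ (b : OrthonormalBasis (Fin n) ℝ (En n)) (a : Fin n → ℝ), (∀ i, i ≠ i₀ → 0 < a i) ∧
      frontier (-p +ᵥ K) =
        {x | ⟪b i₀, x⟫ = √(∑ i ∈ Finset.univ.erase i₀, a i * ⟪b i, x⟫ ^ 2)} := by
  obtain ⟨hpfr, ν₀, hν₀, ν₁, hν₁, hind⟩ := hp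
  have hrank : 3 ≤ finrank ℝ (En n) := by simpa using hn
  have : Nontrivial (En n) := (finrank_pos_iff (R := ℝ)).1 (by omega)
  have hsectioned := isQuadricallySectioned_neg_vadd h p
  have hcone := coe_tangentCone_eq hrank hsectioned
    (by rw [frontier_vadd_set]; exact zero_mem_neg_vadd_iff.2 hpfr) hν₀ hν₁ hind
  set C := tangentCone (-p +ᵥ K)
  have hsalient : ∀ x ∈ C, -x ∈ C → x = 0 := fun x hx hnx => hline p x fun t => by
    rw [← vadd_eq_add, ← Set.mem_neg_vadd_set_iff, ← hcone]
    rcases le_total 0 t with ht | ht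
    · exact C.smul_mem hx ht
    · simpa using C.smul_mem hnx (neg_nonneg.2 ht)
  rw [← hcone] at hsectioned ⊢
  obtain ⟨Q, hQ, hfr⟩ := exists_quadraticForm_eq_zero_on_frontier hsectioned hsalient
  exact exists_frontier_eq_cone_sheet (by simp) hsalient hsectioned.nonempty_interior hQ hfr i₀

theorem image_frontier_eq_cone_sheet (K : Set (En n)) (p : En n)
    (b : OrthonormalBasis (Fin n) ℝ (En n)) {a : Fin n → ℝ} {i₀ : Fin n}
    (h : frontier (-p +ᵥ K) =
      {x | ⟪b i₀, x⟫ = √(∑ i ∈ Finset.univ.erase i₀, a i * ⟪b i, x⟫ ^ 2)}) :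
    ((AffineIsometryEquiv.constVAdd ℝ (En n) (-p)).trans b.repr.toAffineIsometryEquiv) ''
      frontier K = {x | x i₀ = √(∑ i ∈ Finset.univ.erase i₀, a i * x i ^ 2)} := by
  have himage : ((AffineIsometryEquiv.constVAdd ℝ (En n) (-p)).trans
      b.repr.toAffineIsometryEquiv) '' frontier K = b.repr '' frontier (-p +ᵥ K) := by
    rw [frontier_vadd_set, ← Set.image_vadd, Set.image_image]
    rfl
  rw [himage, h, b.repr.image_eq_preimage_symm]
  ext x
  simp [← b.repr_apply_apply]

end ConeSheet

end

/-- Lemma 6: under the hypotheses of Theorem 2 with K line-free, if K is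
not strictly convex or not regular, then the frontier of K is a sheet of an elliptic
cone: in suitable Cartesian coordinates it is {x : x₁ = √(a₂x₂² + ⋯ + aₙxₙ²)} with all
aᵢ > 0. -/
theorem frontier_is_cone_sheet_of_not_strictly_convex_or_not_regular
    {n : ℕ} (hn : 3 ≤ n) (K : Set (En n)) (hKconv : Convex ℝ K) (hKcl : IsClosed K)
    (hKint : (interior K).Nonempty) (hKne : K ≠ Set.univ) (hKlf : LineFree K)
    (δ : sphere (0 : En n) 1 → ℝ) (hδ : Continuous δ)
    (hsec : ∀ u : sphere (0 : En n) 1,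
      IsConvexQuadricIn (sphHyp δ u) (frontier K ∩ sphHyp δ u))
    (hns : ¬ IsStrictlyConvexSet K ∨ ¬ IsRegularSet K) :
    ∃ (f : En n ≃ᵃⁱ[ℝ] En n) (a : Fin n → ℝ), (∀ i : Fin n, 1 ≤ (i : ℕ) → 0 < a i) ∧
      f '' frontier K = {x : En n | x ⟨0, by omega⟩ =
        Real.sqrt (∑ i ∈ Finset.univ.filter (fun i : Fin n => 1 ≤ (i : ℕ)),
          a i * x i ^ 2)} := by
  have hline : ∀ p v : En n, (∀ t : ℝ, p + t • v ∈ K) → v = 0 := fun p v hpv =>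
    not_imp_comm.1 (fun hv => ⟨p, v, hv, hpv⟩) hKlf
  have h : IsQuadricallySectioned K δ :=
    ⟨hKconv, hKcl, hKint, hδ, fun u =>
      hasQuadraticSection_of_isConvexQuadricIn hn hKconv hKcl hline (hsec u)⟩
  obtain ⟨p, hp⟩ : ∃ p, IsSingularPoint K p := hns.elim
    (exists_isSingularPoint_of_not_isStrictlyConvexSet hn h hline)
    (exists_isSingularPoint_of_not_isRegularSet hKconv hKcl hKint)
  obtain ⟨b, a, ha, hfr⟩ :=
    exists_frontier_eq_cone_sheet_of_isSingularPoint hn h hline hp ⟨0, by omega⟩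
  have herase : Finset.univ.filter (fun i : Fin n => 1 ≤ (i : ℕ)) =
      Finset.univ.erase ⟨0, by omega⟩ := by
    ext i
    simp [Fin.ext_iff, Nat.one_le_iff_ne_zero]
  refine ⟨_, a, fun i hi => ha i fun h0 => ?_, herase ▸ image_frontier_eq_cone_sheet K p b hfr⟩
  simp [h0] at hi
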